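/- (Finite length of bounded analytic gradient flow trajectories.) Let n ≥ 1 and let f : ℝⁿ → ℝ be real analytic on all of ℝⁿ. Let ξ : [0,∞) → ℝⁿ be a C¹ curve satisfying ξ'(t) = -∇f(ξ(t)) for all t ≥ 0, and assume that the trajectory {ξ(t) : t ≥ 0} is bounded. Then the trajectory has finite length: ∫₀^∞ |ξ'(t)| dt < ∞. -/

import Mathlib

/-!
The theorem is Łojasiewicz's: along the flow, `f (ξ t)` decreases to a limit `L`, and an inequality
`|f - L| ^ (1 - 1 / k) ≤ k * ‖∇f‖` valid on the tail of the trajectory bounds the speed `‖∇f (ξ t)‖`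
by `-k ^ 2` times the derivative of `(f (ξ t) - L) ^ (1 / k)`, which is integrable
(`lintegral_tail`).

The gradient inequality is only needed along ultrafilters converging to a point
(`lojasiewicz_exponent`): if no `k` worked on the tail, an ultrafilter on the (relatively compact)
trajectory would witness the failure for all `k` at once (`uniform_exponent`).

Along an ultrafilter, the inequality follows from local uniformization (`singleResolution`): an
analytic function becomes a monomial times a unit after an analytic substitution along which the
ultrafilter lifts. For such functions the inequality is elementary (`NormalCrossing.lojasiewicz`),
and it descends by the chain rule. An ultrafilter chooses one chart in every blow-up, so no global
resolution and no gluing is involved.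

Local uniformization is proved by induction on the number of variables, and for a given number of
variables by induction on the order `d` of regularity in the last variable. The Tschirnhausen
transformation (`tschirnhausen`) removes the coefficient of degree `d - 1`; the other coefficients
are monomialized in fewer variables, made comparable, and ramified (`regularResolution_succ`). Then
repeated blow-ups of codimension-two coordinate subspaces lower the order (`resolvable_weighted`),
because a polynomial of degree `d` without term of degree `d - 1` has no root of multiplicity `d`
apart from the trivial case.
-/

open MeasureTheory
open Filter Topology

attribute [local fun_prop] analyticAt_fst analyticAt_snd

/-! ### Hadamard division -/

/-- Hadamard's lemma: an analytic `f` differs from its pullback under the map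
`z ↦ z - l z • e` by an analytic multiple of `l`. For `l e = 1` that map is the projection onto
`ker l` along `e`, and this is division by the coordinate `l`. -/
theorem hadamard_div {E : Type*} [NormedAddCommGroup E] [NormedSpace ℝ E]
    {f : E → ℝ} (hf : AnalyticAt ℝ f 0) (l : E →L[ℝ] ℝ) (e : E) :
    ∃ q : E → ℝ, AnalyticAt ℝ q 0 ∧ ∀ᶠ z in 𝓝 0, f z = f (z - l z • e) + l z * q z := by
  obtain ⟨p, r0, hp⟩ := hf
  obtain ⟨C, r, hC, hr, hpb⟩ := p.le_mul_pow_of_radius_pos hp.radius_pos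
  set P : E →L[ℝ] E := ContinuousLinearMap.id ℝ E - l.smulRight e with hP
  have hPz : ∀ z, P z = z - l z • e := fun z => by simp [hP]
  set K : ℝ := max 1 ‖P‖ with hK
  have hK1 : 1 ≤ K := le_max_left _ _
  -- `T n k` is the coefficient `p (n + 1)` with `e` in the slot `k`, `P` applied in the slots
  -- before `k` and the identity in the slots after it; the `T n k` are the terms of a telescoping sum.
  let T : ∀ n : ℕ, Fin (n+1) → ContinuousMultilinearMap ℝ (fun _ : Fin n => E) ℝ := fun n k =>
    ((p (n+1)).curryMid k e).compContinuousLinearMap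
      (fun i => if (i.castSucc < k) then P else ContinuousLinearMap.id ℝ E)
  have hT : ∀ n k, ‖T n k‖ ≤ C * r^(n+1) * ‖e‖ * K ^ n := by
    intro n k
    refine (ContinuousMultilinearMap.norm_compContinuousLinearMap_le _ _).trans ?_
    have h1 : ‖(p (n+1)).curryMid k e‖ ≤ C * r^(n+1) * ‖e‖ := by
      refine (ContinuousLinearMap.le_opNorm _ _).trans ?_
      rw [ContinuousMultilinearMap.norm_curryMid]
      gcongr
      exact hpb _
    have h2 : ∏ i : Fin n, ‖(if (i.castSucc < k) then P else ContinuousLinearMap.id ℝ E)‖ ≤ K ^ n := by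
      calc _ ≤ ∏ i : Fin n, K := by
            refine Finset.prod_le_prod (fun _ _ => norm_nonneg _) (fun i _ => ?_)
            split_ifs
            · exact le_max_right _ _
            · exact ContinuousLinearMap.norm_id_le.trans hK1
        _ = _ := by simp
    exact mul_le_mul h1 h2 (Finset.prod_nonneg fun _ _ => norm_nonneg _) (by positivity)
  let q : FormalMultilinearSeries ℝ E ℝ := fun n => ∑ k, T n k
  have hq : ∀ n, ‖q n‖ ≤ (C * r * ‖e‖) * (2 * r * K) ^ n := by
    intro n
    calc ‖q n‖ ≤ ∑ k : Fin (n+1), C * r^(n+1) * ‖e‖ * K ^ n :=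
          norm_sum_le_of_le _ (fun k _ => hT n k)
      _ = ((n+1 : ℕ) : ℝ) * (C * r^(n+1) * ‖e‖ * K ^ n) := by simp
      _ ≤ (2:ℝ)^n * (C * r^(n+1) * ‖e‖ * K ^ n) := by
          gcongr
          exact_mod_cast Nat.lt_two_pow_self
      _ = _ := by rw [mul_pow, mul_pow]; ring
  have hpos : 0 < 2 * r * K := by positivity
  have hrad : 0 < q.radius := by
    have := q.le_radius_of_bound (C * r * ‖e‖) (r := Real.toNNReal (2 * r * K)⁻¹) (fun n => by
      rw [Real.coe_toNNReal _ (inv_pos.mpr hpos).le]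
      calc ‖q n‖ * ((2 * r * K)⁻¹) ^ n ≤ (C * r * ‖e‖) * (2 * r * K) ^ n * ((2 * r * K)⁻¹) ^ n := by
            gcongr; exact hq n
        _ = C * r * ‖e‖ := by
            rw [mul_assoc, ← mul_pow, mul_inv_cancel₀ hpos.ne', one_pow, mul_one])
    refine lt_of_lt_of_le ?_ this
    rw [ENNReal.coe_pos]
    exact Real.toNNReal_pos.mpr (inv_pos.mpr hpos)
  have hqb := q.hasFPowerSeriesOnBall hrad
  refine ⟨q.sum, hqb.analyticAt, ?_⟩
  have e1 : ∀ᶠ z in 𝓝 (0:E), HasSum (fun n => p n fun _ => z) (f z) := by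
    filter_upwards [hp.eventually_hasSum] with z hz
    simpa using hz
  have hPt : Tendsto (fun z : E => z - l z • e) (𝓝 0) (𝓝 0) := by
    have : Continuous (fun z : E => z - l z • e) := by fun_prop
    simpa using this.tendsto 0
  have e3 : ∀ᶠ z in 𝓝 (0:E), HasSum (fun n => q n fun _ => z) (q.sum z) := by
    filter_upwards [hqb.eventually_hasSum] with z hz
    simpa using hz
  filter_upwards [e1, hPt.eventually e1, e3] with z h1 h2 h3
  -- `v k` has `P z` in its first `k` slots and `z` in the others, so the difference below telescopes
  -- over `k`, each step changing one slot by `z - P z = l z • e`.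
  have key : ∀ n, (p (n+1) fun _ => z) - (p (n+1) fun _ => z - l z • e) = l z * q n fun _ => z := by
    intro n
    let v : ℕ → Fin (n+1) → E := fun k i => if (i:ℕ) < k then P z else z
    have hv0 : v 0 = fun _ => z := by ext i; simp [v]
    have hvn : v (n+1) = fun _ => z - l z • e := by
      ext i; simp [v, hPz, i.is_lt]
    rw [← hv0, ← hvn, ← Finset.sum_range_sub' (fun k => p (n+1) (v k)), Finset.sum_range]
    simp only [q, _root_.sum_apply, Finset.mul_sum]
    refine Finset.sum_congr rfl (fun k _ => ?_)
    have a1 : v k = Function.update (v k) k z := by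
      ext i; by_cases h : i = k
      · subst h; simp [v]
      · simp [h]
    have a2 : v (k+1) = Function.update (v k) k (P z) := by
      ext i; by_cases h : i = k
      · subst h; simp [v]
      · have : (i:ℕ) ≠ k := fun h' => h (Fin.ext h')
        have : (i:ℕ) < k + 1 ↔ (i:ℕ) < k := by omega
        simp [v, h, this]
    have a3 : z - P z = l z • e := by rw [hPz]; abel
    rw [a1, a2, ← ContinuousMultilinearMap.map_update_sub, a3, ContinuousMultilinearMap.map_update_smul]
    simp only [T, smul_eq_mul, ContinuousMultilinearMap.compContinuousLinearMap_apply, ContinuousMultilinearMap.curryMid_apply]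
    congr 2
    ext i
    refine Fin.succAboveCases k ?_ (fun j => ?_) i
    · simp
    · rw [Function.update_of_ne (Fin.succAbove_ne k j), Fin.insertNth_apply_succAbove]
      by_cases h : j.castSucc < k
      · rw [Fin.succAbove_of_castSucc_lt _ _ h]
        have : (j:ℕ) < k := h
        simp [v, h, this]
      · rw [Fin.succAbove_of_le_castSucc _ _ (not_lt.mp h)]
        have : ¬ (j:ℕ)+1 < k := by
          have : ¬ (j:ℕ) < k := h
          omega
        simp [v, h, this]
  have h4 := h1.sub h2
  have h5 : HasSum (fun n => l z * q n fun _ => z) (l z * q.sum z) := h3.mul_left _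
  rw [← hasSum_nat_add_iff' 1] at h4
  simp only [key] at h4
  have := h4.unique h5
  have h0 : (p 0 fun _ => z) = (p 0 fun _ => z - l z • e) := by congr 1; ext i; exact i.elim0
  simp [h0] at this
  linarith

/-! ### Regular functions and the Tschirnhausen transformation -/

theorem hadamard_snd {E : Type*} [NormedAddCommGroup E] [NormedSpace ℝ E]
    {f : E × ℝ → ℝ} (hf : AnalyticAt ℝ f 0) :
    ∃ q : E × ℝ → ℝ, AnalyticAt ℝ q 0 ∧ ∀ᶠ z in 𝓝 0, f z = f (z.1, 0) + z.2 * q z := by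
  obtain ⟨q, hq, h⟩ := hadamard_div hf (ContinuousLinearMap.snd ℝ E ℝ) (0, 1)
  refine ⟨q, hq, ?_⟩
  filter_upwards [h] with z hz
  rw [hz]
  congr 2
  ext <;> simp

/-- `f` is regular of order `d` in the last variable: `f (0, t)` vanishes at `t = 0` to order
exactly `d`. -/
def RegularOrder {E : Type*} [NormedAddCommGroup E] [NormedSpace ℝ E]
    (d : ℕ) (f : E × ℝ → ℝ) : Prop :=
  ∃ v : ℝ → ℝ, AnalyticAt ℝ v 0 ∧ v 0 ≠ 0 ∧ ∀ᶠ t in 𝓝 (0 : ℝ), f (0, t) = t ^ d * v t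

section
variable {E : Type*} [NormedAddCommGroup E] [NormedSpace ℝ E]

theorem tendsto_slice (x : E) : Tendsto (fun t : ℝ => (x, t)) (𝓝 0) (𝓝 (x, 0)) :=
  (by fun_prop : Continuous fun t : ℝ => (x, t)).tendsto' _ _ rfl

theorem tendsto_base : Tendsto (fun x : E => (x, (0:ℝ))) (𝓝 0) (𝓝 0) :=
  (by fun_prop : Continuous fun x : E => (x, (0:ℝ))).tendsto' _ _ rfl

/-- Taylor expansion in the last variable, with coefficients analytic in the other variables. The
remainder `u` is a unit because `f` is regular of order `d`, and the coefficients vanish at `0` for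
the same reason. -/
theorem taylor_snd (d : ℕ) : ∀ {f : E × ℝ → ℝ}, AnalyticAt ℝ f 0 → RegularOrder d f →
    ∃ (a : ℕ → E → ℝ) (u : E × ℝ → ℝ), (∀ j, AnalyticAt ℝ (a j) 0) ∧ AnalyticAt ℝ u 0 ∧ u 0 ≠ 0 ∧
      (∀ j < d, a j 0 = 0) ∧
      ∀ᶠ z in 𝓝 0, f z = ∑ j ∈ Finset.range d, a j z.1 * z.2 ^ j + z.2 ^ d * u z := by
  induction d with
  | zero =>
    intro f hf ⟨v, hv, hv0, h⟩
    refine ⟨fun _ _ => 0, f, fun _ => analyticAt_const, hf, ?_, by simp, by simp⟩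
    have := h.self_of_nhds
    simp only [pow_zero, one_mul] at this
    rw [← Prod.mk_zero_zero, this]; exact hv0
  | succ d ih =>
    intro f hf ⟨v, hv, hv0, h⟩
    obtain ⟨q, hq, hfq⟩ := hadamard_snd hf
    have hf0 : f (0, 0) = 0 := by simpa using h.self_of_nhds
    have hs := tendsto_slice (0:E)
    have hqs : AnalyticAt ℝ (fun t : ℝ => q (0, t)) 0 :=
      hq.comp_of_eq (f := fun t : ℝ => ((0:E), t)) (by fun_prop) rfl
    have hreg : RegularOrder d q := by
      refine ⟨v, hv, hv0, ?_⟩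
      have h1 : ∀ᶠ t in 𝓝[≠] (0:ℝ), q (0, t) = t ^ d * v t := by
        filter_upwards [(hs.eventually hfq).filter_mono nhdsWithin_le_nhds,
          h.filter_mono nhdsWithin_le_nhds, self_mem_nhdsWithin] with t h1 h2 h3
        simp only [hf0, zero_add] at h1
        have h3 : t ≠ 0 := h3
        apply mul_left_cancel₀ h3
        rw [← h1, h2]; ring
      have h2 : AnalyticAt ℝ (fun t => t ^ d * v t) 0 := by fun_prop
      exact (hqs.frequently_eq_iff_eventually_eq h2).1 h1.frequently
    obtain ⟨a, u, ha, hu, hu0, ha0, hqe⟩ := ih hq hreg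
    refine ⟨fun j => Nat.casesOn j (fun x => f (x, 0)) a, u, ?_, hu, hu0, ?_, ?_⟩
    · rintro (_ | j)
      · exact hf.comp_of_eq (f := fun x : E => (x, (0:ℝ))) (by fun_prop) rfl
      · exact ha j
    · rintro (_ | j) hj
      · exact hf0
      · exact ha0 j (by omega)
    · filter_upwards [hfq, hqe] with z h1 h2
      rw [h1, h2, Finset.sum_range_succ']
      simp only [pow_succ, mul_add, Finset.mul_sum, pow_zero, mul_one]
      have : ∀ x ∈ Finset.range d, z.2 * (a x z.1 * z.2 ^ x) = a x z.1 * (z.2 ^ x * z.2) := by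
        intros; ring
      rw [Finset.sum_congr rfl this]
      change _ = _ + f (z.1, 0) + _
      ring

/-- The partial derivative of `f` in the last variable. -/
noncomputable def derivSnd (f : E × ℝ → ℝ) : E × ℝ → ℝ := fun z => fderiv ℝ f z (0, 1)

theorem analyticAt_derivSnd {f : E × ℝ → ℝ} {z} (hf : AnalyticAt ℝ f z) :
    AnalyticAt ℝ (derivSnd f) z :=
  ((ContinuousLinearMap.apply ℝ ℝ ((0, 1) : E × ℝ)).analyticAt _).comp hf.fderiv

theorem analyticAt_derivSnd_iterate {f : E × ℝ → ℝ} {z} (hf : AnalyticAt ℝ f z) (k : ℕ) :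
    AnalyticAt ℝ (derivSnd^[k] f) z := by
  induction k with
  | zero => exact hf
  | succ k ih => rw [Function.iterate_succ_apply']; exact analyticAt_derivSnd ih

theorem derivSnd_congr {f g : E × ℝ → ℝ} {z} (h : f =ᶠ[𝓝 z] g) : derivSnd f =ᶠ[𝓝 z] derivSnd g := by
  filter_upwards [h.fderiv (𝕜 := ℝ)] with w hw
  simp [derivSnd, hw]

theorem derivSnd_iterate_congr {f g : E × ℝ → ℝ} {z} (h : f =ᶠ[𝓝 z] g) (k : ℕ) :
    derivSnd^[k] f =ᶠ[𝓝 z] derivSnd^[k] g := by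
  induction k with
  | zero => exact h
  | succ k ih => simp only [Function.iterate_succ_apply']; exact derivSnd_congr ih

/-- The Leibniz rule for `derivSnd^[k + 1]` applied to `z.2 * q z`; the term `a`, which does not
involve the last variable, disappears. -/
theorem derivSnd_iterate_step {q : E × ℝ → ℝ} {a : E → ℝ} (hq : AnalyticAt ℝ q 0)
    (ha : AnalyticAt ℝ a 0) (k : ℕ) :
    ∀ᶠ z in 𝓝 0, derivSnd^[k + 1] (fun z => a z.1 + z.2 * q z) z =
      (k + 1) * derivSnd^[k] q z + z.2 * derivSnd^[k + 1] q z := by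
  induction k with
  | zero =>
    have ha' : AnalyticAt ℝ (fun z : E × ℝ => a z.1) 0 :=
      ha.comp_of_eq (f := fun z : E × ℝ => z.1) (by fun_prop) rfl
    have hae : ∀ᶠ z in 𝓝 (0 : E × ℝ), AnalyticAt ℝ a z.1 :=
      (continuous_fst.tendsto' (0 : E × ℝ) 0 rfl).eventually ha.eventually_analyticAt
    filter_upwards [hq.eventually_analyticAt, hae] with z h1 h2
    have d1 : HasFDerivAt (fun z : E × ℝ => a z.1) _ z :=
      h2.differentiableAt.hasFDerivAt.comp z hasFDerivAt_fst
    have d2 : HasFDerivAt (fun z : E × ℝ => z.2 * q z) _ z :=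
      hasFDerivAt_snd.mul h1.differentiableAt.hasFDerivAt
    have d3 := d1.add d2
    simp [derivSnd]
    have d4 : fderiv ℝ (fun z : E × ℝ => a z.1 + z.2 * q z) z = _ := d3.fderiv
    rw [d4]
    simp
    ring
  | succ k ih =>
    have h1 := derivSnd_congr ih
    filter_upwards [h1, hq.eventually_analyticAt] with z h1 h2
    rw [Function.iterate_succ_apply', h1]
    have e1 := analyticAt_derivSnd_iterate h2 k
    have e2 := analyticAt_derivSnd_iterate h2 (k+1)
    have d1 := (e1.differentiableAt.hasFDerivAt).const_mul ((k:ℝ)+1)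
    have d2 : HasFDerivAt (fun z : E × ℝ => z.2 * derivSnd^[k + 1] q z) _ z :=
      hasFDerivAt_snd.mul e2.differentiableAt.hasFDerivAt
    have d3 := d1.add d2
    have d4 : fderiv ℝ (fun z : E × ℝ => (k + 1) * derivSnd^[k] q z + z.2 * derivSnd^[k + 1] q z) z = _ := d3.fderiv
    rw [derivSnd, d4]
    rw [Function.iterate_succ_apply' derivSnd (k+1), Function.iterate_succ_apply' derivSnd k]
    simp [derivSnd]
    ring

/-- The Taylor coefficients of `taylor_snd` are the derivatives of `f` along `z.2 = 0`, divided by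
factorials. -/
theorem derivSnd_iterate_taylor (k : ℕ) : ∀ {f u : E × ℝ → ℝ} {a : ℕ → E → ℝ},
    (∀ j, AnalyticAt ℝ (a j) 0) → AnalyticAt ℝ u 0 →
    (∀ᶠ z in 𝓝 0, f z = ∑ j ∈ Finset.range k, a j z.1 * z.2 ^ j + z.2 ^ k * u z) →
    ∀ᶠ x in 𝓝 (0 : E), derivSnd^[k] f (x, 0) = k.factorial * u (x, 0) := by
  induction k with
  | zero =>
    intro f u a ha hu h
    filter_upwards [tendsto_base.eventually h] with x hx
    simpa using hx
  | succ k ih =>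
    intro f u a ha hu h
    set q : E × ℝ → ℝ := fun z => ∑ j ∈ Finset.range k, a (j+1) z.1 * z.2 ^ j + z.2 ^ k * u z with hqd
    have hq : AnalyticAt ℝ q 0 := by
      have : ∀ j, AnalyticAt ℝ (fun z : E × ℝ => a (j+1) z.1) 0 := fun j =>
        (ha (j+1)).comp_of_eq (f := fun z : E × ℝ => z.1) (by fun_prop) rfl
      refine AnalyticAt.add ?_ (by fun_prop)
      exact Finset.analyticAt_fun_sum _ fun j _ => (this j).mul (by fun_prop)
    have h1 := ih (fun j => ha (j+1)) hu (f := q) (Eventually.of_forall fun z => rfl)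
    have h2 := derivSnd_iterate_step hq (ha 0) k
    have h3 : f =ᶠ[𝓝 0] fun z => a 0 z.1 + z.2 * q z := by
      filter_upwards [h] with z hz
      rw [hz, Finset.sum_range_succ', hqd]
      simp only [pow_succ, mul_add, Finset.mul_sum]
      simp only [pow_zero, mul_one]
      have : ∀ x ∈ Finset.range k, z.2 * (a (x+1) z.1 * z.2 ^ x) = a (x+1) z.1 * (z.2 ^ x * z.2) := by
        intros; ring
      rw [Finset.sum_congr rfl this]
      ring
    have h4 := derivSnd_iterate_congr h3 (k+1)
    filter_upwards [h1, tendsto_base.eventually h2, tendsto_base.eventually h4] with x h1 h2 h4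
    rw [h4, h2, h1, Nat.factorial_succ]
    push_cast
    ring

theorem derivSnd_iterate_shift {f : E × ℝ → ℝ} {h : E → ℝ} (hf : AnalyticAt ℝ f 0)
    (hh : AnalyticAt ℝ h 0) (h0 : h 0 = 0) (k : ℕ) :
    ∀ᶠ z in 𝓝 0, derivSnd^[k] (fun z => f (z.1, z.2 + h z.1)) z = derivSnd^[k] f (z.1, z.2 + h z.1) := by
  induction k with
  | zero => simp
  | succ k ih =>
    have hae : ∀ᶠ z in 𝓝 (0 : E × ℝ), AnalyticAt ℝ h z.1 :=
      (continuous_fst.tendsto' (0 : E × ℝ) 0 rfl).eventually hh.eventually_analyticAt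
    have hT : AnalyticAt ℝ (fun z : E × ℝ => (z.1, z.2 + h z.1)) 0 := by
      have : AnalyticAt ℝ (fun z : E × ℝ => h z.1) 0 :=
        hh.comp_of_eq (f := fun z : E × ℝ => z.1) (by fun_prop) rfl
      fun_prop
    have hT0 : Tendsto (fun z : E × ℝ => (z.1, z.2 + h z.1)) (𝓝 0) (𝓝 0) := by
      have := hT.continuousAt.tendsto
      simpa [h0, ← Prod.zero_eq_mk] using this
    filter_upwards [derivSnd_congr ih, hae, hT0.eventually hf.eventually_analyticAt] with z h1 h2 h3
    rw [Function.iterate_succ_apply', h1, Function.iterate_succ_apply']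
    have d1 := (analyticAt_derivSnd_iterate h3 k).differentiableAt.hasFDerivAt
    have d2 : HasFDerivAt (fun z : E × ℝ => (z.1, z.2 + h z.1)) _ z :=
      hasFDerivAt_fst.prodMk (hasFDerivAt_snd.add (h2.differentiableAt.hasFDerivAt.comp z hasFDerivAt_fst))
    have d4 : fderiv ℝ (fun z : E × ℝ => derivSnd^[k] f (z.1, z.2 + h z.1)) z = _ := (d1.comp z d2).fderiv
    rw [derivSnd, d4]
    simp [derivSnd]

/-- Analytic Tschirnhausen transformation: after a translation of the last variable by an analytic
function `h` of the others, the coefficient of `z.2 ^ k` in an `f` regular of order `k + 1` vanishes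
identically. The function `h` is obtained from the implicit function theorem applied to the `k`-th
derivative of `f` in the last variable, which has a simple zero along the last axis. -/
theorem tschirnhausen [CompleteSpace E] {k : ℕ} {f : E × ℝ → ℝ} (hf : AnalyticAt ℝ f 0)
    (hreg : RegularOrder (k + 1) f) :
    ∃ h : E → ℝ, AnalyticAt ℝ h 0 ∧ h 0 = 0 ∧ ∃ (a : ℕ → E → ℝ) (u : E × ℝ → ℝ),
      (∀ j, AnalyticAt ℝ (a j) 0) ∧ AnalyticAt ℝ u 0 ∧ u 0 ≠ 0 ∧ (∀ j < k, a j 0 = 0) ∧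
      ∀ᶠ z in 𝓝 0, f (z.1, z.2 + h z.1) =
        ∑ j ∈ Finset.range k, a j z.1 * z.2 ^ j + z.2 ^ (k + 1) * u z := by
  set G := derivSnd^[k] f with hG
  have hGa : AnalyticAt ℝ G 0 := analyticAt_derivSnd_iterate hf k
  have taylorlow : ∀ {F : E × ℝ → ℝ} {a : ℕ → E → ℝ} {u : E × ℝ → ℝ}, (∀ j, AnalyticAt ℝ (a j) 0) →
      AnalyticAt ℝ u 0 → (∀ᶠ z in 𝓝 0, F z = ∑ j ∈ Finset.range (k+1), a j z.1 * z.2 ^ j + z.2 ^ (k+1) * u z) →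
      ∀ᶠ x in 𝓝 (0 : E), derivSnd^[k] F (x, 0) = k.factorial * a k x := by
    intro F a u ha hu h
    have := derivSnd_iterate_taylor k (f := F) (u := fun z => a k z.1 + z.2 * u z) ha ?_ ?_
    · simpa using this
    · have : AnalyticAt ℝ (fun z : E × ℝ => a k z.1) 0 :=
        (ha k).comp_of_eq (f := fun z : E × ℝ => z.1) (by fun_prop) rfl
      fun_prop
    · filter_upwards [h] with z hz
      rw [hz, Finset.sum_range_succ]; ring
  obtain ⟨a, u, ha, hu, hu0, ha0, hfe⟩ := taylor_snd (k+1) hf hreg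
  have hG0 : G 0 = 0 := by
    have := (taylorlow ha hu hfe).self_of_nhds
    rw [ha0 k (by omega), mul_zero] at this
    exact this
  have hG1 : fderiv ℝ G 0 (0, 1) ≠ 0 := by
    have := (derivSnd_iterate_taylor (k+1) ha hu hfe).self_of_nhds
    rw [Function.iterate_succ_apply'] at this
    change fderiv ℝ G 0 (0, 1) = _ at this
    rw [this]
    exact mul_ne_zero (by exact_mod_cast Nat.factorial_ne_zero _) hu0
  have hcd : ContDiffAt ℝ ⊤ G 0 := hGa.contDiffAt
  have hinv : (fderiv ℝ G 0 ∘L .inr ℝ E ℝ).IsInvertible := by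
    refine ⟨ContinuousLinearEquiv.unitsEquivAut ℝ (Units.mk0 _ hG1), ?_⟩
    ext
    simp
  set h := hcd.implicitFunction (by simp) hinv with hh
  have hh0 : h 0 = 0 := hcd.implicitFunction_apply_self (by simp) hinv
  have hha : AnalyticAt ℝ h 0 := (hcd.contDiffAt_implicitFunction (by simp) hinv).analyticAt
  have hGh : ∀ᶠ x in 𝓝 (0:E), G (x, h x) = 0 := by
    have := hcd.eventually_apply_implicitFunction (by simp) hinv
    rw [hG0] at this
    exact this
  refine ⟨h, hha, hh0, ?_⟩
  have hFa : AnalyticAt ℝ (fun z : E × ℝ => f (z.1, z.2 + h z.1)) 0 := by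
    have : AnalyticAt ℝ (fun z : E × ℝ => h z.1) 0 :=
        hha.comp_of_eq (f := fun z : E × ℝ => z.1) (by fun_prop) rfl
    exact hf.comp_of_eq (f := fun z : E × ℝ => (z.1, z.2 + h z.1)) (by fun_prop) (by simp [hh0])
  have hFr : RegularOrder (k+1) (fun z : E × ℝ => f (z.1, z.2 + h z.1)) := by
    obtain ⟨v, h1, h2, h3⟩ := hreg
    exact ⟨v, h1, h2, by simpa [hh0] using h3⟩
  obtain ⟨b, w, hb, hw, hw0, hb0, hFe⟩ := taylor_snd (k+1) hFa hFr
  refine ⟨b, w, hb, hw, hw0, fun j hj => hb0 j (by omega), ?_⟩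
  have hbk : ∀ᶠ x in 𝓝 (0:E), b k x = 0 := by
    filter_upwards [taylorlow hb hw hFe, tendsto_base.eventually (derivSnd_iterate_shift hf hha hh0 k), hGh] with x h1 h2 h3
    rw [h2] at h1
    simp only [zero_add] at h1
    rw [← hG, h3] at h1
    have : ((k.factorial : ℕ) : ℝ) ≠ 0 := by exact_mod_cast Nat.factorial_ne_zero _
    exact (mul_eq_zero.1 h1.symm).resolve_left this
  have hbk' : ∀ᶠ z in 𝓝 (0:E × ℝ), b k z.1 = 0 := (continuous_fst.tendsto' (0 : E × ℝ) 0 rfl).eventually hbk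
  filter_upwards [hFe, hbk'] with z h1 h2
  rw [h1, Finset.sum_range_succ, h2]; ring

end

/-! ### Monomials and normal crossings -/

theorem eventually_zero_of_mul {E : Type*} [NormedAddCommGroup E] [NormedSpace ℝ E] {f g : E → ℝ}
    (hf : AnalyticAt ℝ f 0) (hg : AnalyticAt ℝ g 0) (h : ∀ᶠ x in 𝓝 0, f x * g x = 0) :
    (∀ᶠ x in 𝓝 0, f x = 0) ∨ ∀ᶠ x in 𝓝 0, g x = 0 := by
  by_contra! hcon
  obtain ⟨r, hr, hball⟩ := Metric.eventually_nhds_iff_ball.1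
    (hf.eventually_analyticAt.and (hg.eventually_analyticAt.and h))
  have hfreq : ∃ᶠ x in 𝓝 (0:E), f x ≠ 0 := hcon.1
  obtain ⟨x, hx, hxb⟩ := (hfreq.and_eventually (Metric.ball_mem_nhds (0:E) hr)).exists
  have hne : ∀ᶠ y in 𝓝 x, f y ≠ 0 := (hball x hxb).1.continuousAt.eventually_ne hx
  have hgx : g =ᶠ[𝓝 x] 0 := by
    filter_upwards [hne, Metric.isOpen_ball.mem_nhds hxb] with y h1 h2
    exact (mul_eq_zero.1 (hball y h2).2.2).resolve_left h1
  have hga : AnalyticOnNhd ℝ g (Metric.ball 0 r) := fun y hy => (hball y hy).2.1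
  have := hga.eqOn_zero_of_preconnected_of_eventuallyEq_zero
    (convex_ball (0:E) r).isPreconnected hxb hgx
  apply hcon.2
  filter_upwards [Metric.ball_mem_nhds (0:E) hr] with y hy using not_not.2 (this hy)

theorem eventually_zero_of_prod {E ι : Type*} [NormedAddCommGroup E] [NormedSpace ℝ E]
    {F : ι → E → ℝ} (hF : ∀ i, AnalyticAt ℝ (F i) 0) (s : Finset ι)
    (h : ∀ᶠ x in 𝓝 0, ∏ i ∈ s, F i x = 0) : ∃ i ∈ s, ∀ᶠ x in 𝓝 0, F i x = 0 := by
  classical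
  induction s using Finset.induction_on with
  | empty => exact absurd h.self_of_nhds (by simp)
  | insert i s hi ih =>
    simp only [Finset.prod_insert hi] at h
    rcases eventually_zero_of_mul (hF i) (Finset.analyticAt_fun_prod s fun j _ => hF j) h with h | h
    · exact ⟨i, by simp, h⟩
    · obtain ⟨j, hj, hz⟩ := ih h
      exact ⟨j, by simp [hj], hz⟩

section
variable {n : ℕ}

/-- The monomial `x ^ α` with multi-exponent `α`. -/
def mon (α : Fin n → ℕ) (x : Fin n → ℝ) : ℝ := ∏ i, x i ^ α i

theorem mon_add (α β : Fin n → ℕ) (x : Fin n → ℝ) : mon (α + β) x = mon α x * mon β x := by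
  simp [mon, pow_add, Finset.prod_mul_distrib]

theorem mon_zero (x : Fin n → ℝ) : mon 0 x = 1 := by simp [mon]

theorem mon_single (i : Fin n) (x : Fin n → ℝ) : mon (Pi.single i 1) x = x i := by
  rw [mon, Finset.prod_eq_single i] <;> simp +contextual

theorem mon_smul (k : ℕ) (α : Fin n → ℕ) (x : Fin n → ℝ) : mon (k • α) x = mon α x ^ k := by
  simp [mon, ← Finset.prod_pow, mul_comm k, pow_mul]

theorem mon_eq_zero {α : Fin n → ℕ} {x : Fin n → ℝ} (i : Fin n) (hi : α i ≠ 0) (hx : x i = 0) :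
    mon α x = 0 := Finset.prod_eq_zero (Finset.mem_univ i) (by simp [hx, hi])

theorem mon_ne_zero {α : Fin n → ℕ} {x : Fin n → ℝ} (h : ∀ i, x i = 0 → α i = 0) :
    mon α x ≠ 0 := Finset.prod_ne_zero_iff.2 fun i _ => by
  by_cases hx : x i = 0
  · simp [h i hx]
  · exact pow_ne_zero _ hx

theorem mon_split {α : Fin n → ℕ} (i : Fin n) (hi : α i ≠ 0) :
    ∃ β : Fin n → ℕ, α = Pi.single i 1 + β := by
  refine ⟨α - Pi.single i 1, ?_⟩
  ext k
  by_cases hk : k = i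
  · subst hk; simp; omega
  · simp [hk]

@[fun_prop]
theorem analyticAt_eval (i : Fin n) (x : Fin n → ℝ) : AnalyticAt ℝ (fun x : Fin n → ℝ => x i) x :=
  (ContinuousLinearMap.proj (R := ℝ) (φ := fun _ : Fin n => ℝ) i).analyticAt x

@[fun_prop]
theorem analyticAt_mon (α : Fin n → ℕ) (x : Fin n → ℝ) : AnalyticAt ℝ (mon α) x :=
  Finset.analyticAt_fun_prod _ fun i _ => (analyticAt_eval i x).pow _

theorem mon_not_eventually_zero (α : Fin n → ℕ) : ¬ ∀ᶠ x in 𝓝 0, mon α x = 0 := by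
  intro h
  have ht : Tendsto (fun t : ℝ => (fun _ : Fin n => t)) (𝓝[≠] 0) (𝓝 0) :=
    ((by fun_prop : Continuous fun t : ℝ => (fun _ : Fin n => t)).tendsto' 0 0 rfl).mono_left
      nhdsWithin_le_nhds
  obtain ⟨t, h1, h2⟩ := ((ht.eventually h).and self_mem_nhdsWithin).exists
  exact mon_ne_zero (α := α) (fun i hi => absurd hi h2) h1

/-- Near `0`, `f` is a monomial times an analytic unit. -/
def NormalCrossing (f : (Fin n → ℝ) → ℝ) : Prop :=
  ∃ (α : Fin n → ℕ) (u : (Fin n → ℝ) → ℝ), AnalyticAt ℝ u 0 ∧ u 0 ≠ 0 ∧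
    ∀ᶠ x in 𝓝 0, f x = mon α x * u x

/-- Near `0`, `f` either vanishes identically or is a monomial times a unit. -/
def Monomialized (f : (Fin n → ℝ) → ℝ) : Prop := (∀ᶠ x in 𝓝 0, f x = 0) ∨ NormalCrossing f

theorem cancel_mon {f g : (Fin n → ℝ) → ℝ} (hf : AnalyticAt ℝ f 0) (hg : AnalyticAt ℝ g 0)
    (α : Fin n → ℕ) (h : ∀ᶠ x in 𝓝 0, mon α x * f x = mon α x * g x) : ∀ᶠ x in 𝓝 0, f x = g x := by
  have := (eventually_zero_of_mul (analyticAt_mon α 0) (hf.sub hg) (by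
    filter_upwards [h] with x hx
    simp only [Pi.sub_apply, mul_sub]; linarith)).resolve_left (mon_not_eventually_zero α)
  filter_upwards [this] with x hx
  simpa [sub_eq_zero] using hx

/-- A function that vanishes on the hyperplane `x i = 0` is divisible by `x i`. -/
theorem dvd_coord {f : (Fin n → ℝ) → ℝ} (hf : AnalyticAt ℝ f 0) (i : Fin n)
    (h : ∀ᶠ x in 𝓝 0, f (x - x i • Pi.single i 1) = 0) :
    ∃ q, AnalyticAt ℝ q 0 ∧ ∀ᶠ x in 𝓝 0, f x = mon (Pi.single i 1) x * q x := by
  obtain ⟨q, hq, hfq⟩ := hadamard_div hf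
    (ContinuousLinearMap.proj (R := ℝ) (φ := fun _ : Fin n => ℝ) i) (Pi.single i 1)
  refine ⟨q, hq, ?_⟩
  filter_upwards [hfq, h] with x h1 h2
  rw [h1, mon_single]
  simp only [ContinuousLinearMap.proj_apply, h2, zero_add]

/-- A factor of a normal crossing is a normal crossing. By induction on the degree `N` of the
monomial: a coordinate dividing the product `f * g` divides `f` or `g` and can be cancelled. -/
theorem NormalCrossing.of_mul (N : ℕ) : ∀ {f g u : (Fin n → ℝ) → ℝ} {α : Fin n → ℕ},
    AnalyticAt ℝ f 0 → AnalyticAt ℝ g 0 → AnalyticAt ℝ u 0 → u 0 ≠ 0 → ∑ i, α i = N →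
    (∀ᶠ x in 𝓝 0, f x * g x = mon α x * u x) → NormalCrossing f := by
  induction N with
  | zero =>
    intro f g u α hf hg hu hu0 hα h
    have hα0 : α = 0 := by
      ext i
      simpa using (Finset.sum_eq_zero_iff.1 hα) i
    refine ⟨0, f, hf, ?_, by simp [mon_zero]⟩
    have := h.self_of_nhds
    rw [hα0, mon_zero, one_mul] at this
    rw [← this] at hu0
    exact left_ne_zero_of_mul hu0
  | succ N ih =>
    intro f g u α hf hg hu hu0 hα h
    obtain ⟨i, hi⟩ : ∃ i, α i ≠ 0 := by
      by_contra! hcon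
      simp [hcon] at hα
    obtain ⟨β, rfl⟩ := mon_split i hi
    have hβ : ∑ i, β i = N := by
      simp [Finset.sum_add_distrib] at hα
      omega
    have hπa : AnalyticAt ℝ (fun x : Fin n → ℝ => x - x i • Pi.single i (1:ℝ)) 0 :=
      analyticAt_id.sub ((analyticAt_eval i 0).smul analyticAt_const)
    have hπ : Tendsto (fun x : Fin n → ℝ => x - x i • Pi.single i (1:ℝ)) (𝓝 0) (𝓝 0) := by
      simpa using hπa.continuousAt.tendsto
    have hz : ∀ᶠ x in 𝓝 (0 : Fin n → ℝ),
        f (x - x i • Pi.single i 1) * g (x - x i • Pi.single i 1) = 0 := by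
      filter_upwards [hπ.eventually h] with x hx
      rw [hx, mon_eq_zero i hi (by simp), zero_mul]
    rcases eventually_zero_of_mul (hf.comp_of_eq hπa (by simp)) (hg.comp_of_eq hπa (by simp)) hz
      with hz | hz
    · obtain ⟨q, hq, hfq⟩ := dvd_coord hf i hz
      have : ∀ᶠ x in 𝓝 0, q x * g x = mon β x * u x := by
        refine cancel_mon (by fun_prop) (by fun_prop) (Pi.single i 1) ?_
        filter_upwards [hfq, h] with x h1 h2
        rw [← mul_assoc, ← h1, h2, mon_add, mul_assoc]
      obtain ⟨γ, w, hw, hw0, hqe⟩ := ih hq hg hu hu0 hβ this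
      refine ⟨Pi.single i 1 + γ, w, hw, hw0, ?_⟩
      filter_upwards [hfq, hqe] with x h1 h2
      rw [h1, h2, mon_add, mul_assoc]
    · obtain ⟨q, hq, hgq⟩ := dvd_coord hg i hz
      refine ih hf hq hu hu0 hβ ?_
      refine cancel_mon (by fun_prop) (by fun_prop) (Pi.single i 1) ?_
      filter_upwards [hgq, h] with x h1 h2
      rw [mul_left_comm, ← h1, h2, mon_add, mul_assoc]

/-- There are points arbitrarily near `0` in the hyperplane `x k = 0` at which `x ^ α` vanishes and
`x ^ β * v x` does not: those with `x i = x k = 0` and all other coordinates nonzero. -/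
theorem frequently_hyperplane {α β : Fin n → ℕ} {v : (Fin n → ℝ) → ℝ} (hv : AnalyticAt ℝ v 0)
    (hv0 : v 0 ≠ 0) (i k : Fin n) (hα : α i ≠ 0) (hβi : β i = 0) (hβk : β k = 0) :
    ∃ᶠ x in 𝓝 (0 : Fin n → ℝ), x k = 0 ∧ mon α x = 0 ∧ mon β x * v x ≠ 0 := by
  let p : ℝ → Fin n → ℝ := fun t l => if l = i ∨ l = k then 0 else t
  have hp : Continuous p := by
    refine continuous_pi fun l => ?_
    by_cases h : l = i ∨ l = k
    · simp only [p, h, if_true]; fun_prop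
    · simp only [p, h, if_false]; fun_prop
  have ht : Tendsto p (𝓝[≠] 0) (𝓝 0) :=
    (hp.tendsto' 0 0 (by ext l; simp [p])).mono_left nhdsWithin_le_nhds
  refine ht.frequently (Eventually.frequently ?_)
  filter_upwards [ht.eventually (hv.continuousAt.eventually_ne hv0), self_mem_nhdsWithin] with t h1 h2
  refine ⟨by simp [p], mon_eq_zero i hα (by simp [p]), mul_ne_zero (mon_ne_zero fun l hl => ?_) h1⟩
  by_cases h : l = i ∨ l = k
  · rcases h with rfl | rfl <;> assumption
  · simp only [p, h, if_false] at hl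
    exact absurd hl h2

/-- If two monomials times units and their difference are all monomialized, then one monomial divides
the other. Otherwise, dividing by the greatest common divisor leaves `x ^ α' * u - x ^ β' * v` with
disjoint nontrivial `α'`, `β'`; it is a normal crossing that vanishes at `0`, so it vanishes on
some coordinate hyperplane, but only one of its two terms can vanish identically there. -/
theorem exponents_comparable {α β : Fin n → ℕ} {u v : (Fin n → ℝ) → ℝ} (hu : AnalyticAt ℝ u 0)
    (hu0 : u 0 ≠ 0) (hv : AnalyticAt ℝ v 0) (hv0 : v 0 ≠ 0)
    (h : Monomialized fun x => mon α x * u x - mon β x * v x) : α ≤ β ∨ β ≤ α := by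
  by_contra! hcon
  obtain ⟨h1, h2⟩ := hcon
  simp only [Pi.le_def, not_forall, not_le] at h1 h2
  obtain ⟨i, hi⟩ := h1
  obtain ⟨j, hj⟩ := h2
  set μ := α ⊓ β
  obtain ⟨α', hα'⟩ : ∃ α', α = μ + α' := ⟨α - μ, by ext k; simp [μ]⟩
  obtain ⟨β', hβ'⟩ : ∃ β', β = μ + β' := ⟨β - μ, by ext k; simp [μ]⟩
  have hdisj : ∀ k, α' k = 0 ∨ β' k = 0 := fun k => by
    have e1 := congrFun hα' k
    have e2 := congrFun hβ' k
    simp only [Pi.add_apply, μ, Pi.inf_apply] at e1 e2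
    omega
  have hαi : α' i ≠ 0 := by
    have e1 := congrFun hα' i
    simp only [Pi.add_apply, μ, Pi.inf_apply] at e1
    omega
  have hβj : β' j ≠ 0 := by
    have e1 := congrFun hβ' j
    simp only [Pi.add_apply, μ, Pi.inf_apply] at e1
    omega
  have hβi : β' i = 0 := (hdisj i).resolve_left hαi
  have hαj : α' j = 0 := (hdisj j).resolve_right hβj
  set H : (Fin n → ℝ) → ℝ := fun x => mon α' x * u x - mon β' x * v x with hH
  have hHa : AnalyticAt ℝ H 0 := by fun_prop
  have hmul : ∀ x, mon α x * u x - mon β x * v x = mon μ x * H x := fun x => by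
    conv_lhs => rw [hα', hβ', mon_add, mon_add]
    rw [hH]; ring
  simp only [hmul] at h
  have hH0 : ¬ ∀ᶠ x in 𝓝 0, H x = 0 := fun hz => by
    obtain ⟨x, ⟨-, h1, h2⟩, h3⟩ :=
      ((frequently_hyperplane (α := α') (β := β') hv hv0 i i hαi hβi hβi).and_eventually hz).exists
    simp [hH, h1, -mul_eq_zero] at h3
    exact h2 h3
  rcases h with h | ⟨γ, w, hw, hw0, h⟩
  · exact hH0 ((eventually_zero_of_mul (analyticAt_mon μ 0) hHa h).resolve_left
      (mon_not_eventually_zero μ))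
  · obtain ⟨γ, w, hw, hw0, h⟩ := NormalCrossing.of_mul _ hHa (analyticAt_mon μ 0) hw hw0 rfl
      (by simpa only [mul_comm] using h)
    have hγ : γ = 0 := by
      ext k
      by_contra hk
      change γ k ≠ 0 at hk
      rcases hdisj k with hk' | hk'
      · obtain ⟨x, ⟨h0, h1, h2⟩, h3⟩ :=
          ((frequently_hyperplane (α := β') (β := α') hu hu0 j k hβj hαj hk').and_eventually h).exists
        rw [mon_eq_zero k hk h0, hH] at h3
        simp [h1, -mul_eq_zero] at h3
        exact h2 h3
      · obtain ⟨x, ⟨h0, h1, h2⟩, h3⟩ :=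
          ((frequently_hyperplane (α := α') (β := β') hv hv0 i k hαi hβi hk').and_eventually h).exists
        rw [mon_eq_zero k hk h0, hH] at h3
        simp [h1, -mul_eq_zero] at h3
        exact h2 h3
    have := h.self_of_nhds
    rw [hγ, mon_zero, one_mul, hH] at this
    simp only [mon_eq_zero (x := (0 : Fin n → ℝ)) i hαi rfl, mon_eq_zero (x := (0 : Fin n → ℝ)) j hβj rfl] at this
    exact hw0 (by simpa using this.symm)
end

/-! ### Substitutions centred along an ultrafilter -/

section
variable {D E F : Type*} [NormedAddCommGroup D] [NormedSpace ℝ D] [NormedAddCommGroup E]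
  [NormedSpace ℝ E] [NormedAddCommGroup F] [NormedSpace ℝ F]

/-- The substitution `φ`, from a neighbourhood of `0` in `E` to one in `F`, is centred along the
ultrafilter `U` on `F`: it is analytic, maps `0` to `0`, and has a set-theoretic section `s` defined
`U`-almost everywhere along which `U` lifts to an ultrafilter `V` converging to `0`. The section
need not be continuous. Blow-up charts and ramifications are of this kind, `V` playing the role of
the centre of a valuation in local uniformization. -/
structure Admissible (U : Ultrafilter F) (φ : E → F) (V : Ultrafilter E) : Prop where
  analytic : AnalyticAt ℝ φ 0
  map_zero : φ 0 = 0
  le_nhds : (V : Filter E) ≤ 𝓝 0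
  exists_section : ∃ s : F → E, V = U.map s ∧ ∀ᶠ x in U, φ (s x) = x

theorem Admissible.of_section {U : Ultrafilter F} {φ : E → F} (s : F → E) (hφ : AnalyticAt ℝ φ 0)
    (h0 : φ 0 = 0) (hs : Tendsto s U (𝓝 0)) (h : ∀ᶠ x in U, φ (s x) = x) :
    Admissible U φ (U.map s) := ⟨hφ, h0, hs, s, rfl, h⟩

theorem Admissible.comp {U : Ultrafilter F} {φ : E → F} {V : Ultrafilter E} {ψ : D → E}
    {W : Ultrafilter D} (h : Admissible U φ V) (h' : Admissible V ψ W) :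
    Admissible U (φ ∘ ψ) W := by
  obtain ⟨s, rfl, hs⟩ := h.exists_section
  obtain ⟨t, rfl, ht⟩ := h'.exists_section
  refine ⟨h.analytic.comp_of_eq h'.analytic h'.map_zero, by simp [h.map_zero, h'.map_zero],
    h'.le_nhds, t ∘ s, by rw [Ultrafilter.map_map], ?_⟩
  have ht' : ∀ᶠ x in U, ψ (t (s x)) = s x := ht
  filter_upwards [hs, ht'] with x h1 h2
  simp [h2, h1]

theorem Admissible.tendsto {U : Ultrafilter F} {φ : E → F} {V : Ultrafilter E}
    (h : Admissible U φ V) : Tendsto φ (𝓝 0) (𝓝 0) := by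
  simpa [h.map_zero] using h.analytic.continuousAt.tendsto

theorem Admissible.comp_analyticAt {U : Ultrafilter F} {φ : E → F} {V : Ultrafilter E}
    (h : Admissible U φ V) {f : F → ℝ} (hf : AnalyticAt ℝ f 0) : AnalyticAt ℝ (f ∘ φ) 0 :=
  hf.comp_of_eq h.analytic h.map_zero

/-- `f` becomes monomialized after a substitution centred along `U`. -/
def Resolvable (n : ℕ) (U : Ultrafilter F) (f : F → ℝ) : Prop :=
  ∃ (φ : (Fin n → ℝ) → F) (V : Ultrafilter (Fin n → ℝ)), Admissible U φ V ∧ Monomialized (f ∘ φ)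

theorem Monomialized.congr {n : ℕ} {f g : (Fin n → ℝ) → ℝ} (hf : Monomialized f)
    (h : ∀ᶠ x in 𝓝 0, f x = g x) : Monomialized g := by
  rcases hf with hf | ⟨α, u, hu, hu0, hf⟩
  · left; filter_upwards [hf, h] with x h1 h2; rw [← h2, h1]
  · right; refine ⟨α, u, hu, hu0, ?_⟩; filter_upwards [hf, h] with x h1 h2; rw [← h2, h1]

theorem Resolvable.congr {n : ℕ} {U : Ultrafilter F} {f g : F → ℝ} (hf : Resolvable n U f)
    (h : ∀ᶠ x in 𝓝 0, f x = g x) : Resolvable n U g := by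
  obtain ⟨φ, V, h1, h2⟩ := hf
  exact ⟨φ, V, h1, h2.congr (h1.tendsto.eventually h)⟩

theorem Resolvable.of_pullback {n : ℕ} {U : Ultrafilter F} {f : F → ℝ} {φ : E → F}
    {V : Ultrafilter E} (h : Admissible U φ V) (hf : Resolvable n V (f ∘ φ)) : Resolvable n U f := by
  obtain ⟨ψ, W, h1, h2⟩ := hf
  exact ⟨φ ∘ ψ, W, h.comp h1, h2⟩
end

/-- Local uniformization for one analytic function of `n` variables, along any ultrafilter
converging to `0`. -/
def SingleResolution (n : ℕ) : Prop := ∀ f : (Fin n → ℝ) → ℝ, AnalyticAt ℝ f 0 →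
  ∀ U : Ultrafilter (Fin n → ℝ), (U : Filter (Fin n → ℝ)) ≤ 𝓝 0 → Resolvable n U f

/-- Simultaneous local uniformization of a finite family of analytic functions of `n` variables. -/
def FamilyResolution (n : ℕ) : Prop := ∀ (ι : Type) [Fintype ι] (F : ι → (Fin n → ℝ) → ℝ),
  (∀ i, AnalyticAt ℝ (F i) 0) → ∀ U : Ultrafilter (Fin n → ℝ), (U : Filter (Fin n → ℝ)) ≤ 𝓝 0 →
  ∃ (φ : (Fin n → ℝ) → (Fin n → ℝ)) (V : Ultrafilter (Fin n → ℝ)), Admissible U φ V ∧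
    ∀ i, Monomialized (F i ∘ φ)

open Classical in
/-- A finite family is monomialized by monomializing the product of its members that do not vanish
identically near `0`. The substitution may turn one of them into the zero function; the number of
remaining members then drops, and the process is repeated. -/
theorem SingleResolution.family {n : ℕ} (H : SingleResolution n) : FamilyResolution n := by
  intro ι _
  suffices ∀ (m : ℕ) (F : ι → (Fin n → ℝ) → ℝ), (∀ i, AnalyticAt ℝ (F i) 0) →
      (Finset.univ.filter fun i => ¬ ∀ᶠ x in 𝓝 0, F i x = 0).card = m →
      ∀ U : Ultrafilter (Fin n → ℝ), (U : Filter (Fin n → ℝ)) ≤ 𝓝 0 →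
      ∃ (φ : (Fin n → ℝ) → (Fin n → ℝ)) (V : Ultrafilter (Fin n → ℝ)), Admissible U φ V ∧
        ∀ i, Monomialized (F i ∘ φ) from fun F hF U hU => this _ F hF rfl U hU
  intro m
  induction m using Nat.strong_induction_on with
  | _ m ih =>
  intro F hF hm U hU
  set s := Finset.univ.filter fun i => ¬ ∀ᶠ x in 𝓝 0, F i x = 0 with hs
  obtain ⟨φ, V, hφ, hM⟩ := H (fun x => ∏ i ∈ s, F i x)
    (Finset.analyticAt_fun_prod s fun j _ => hF j) U hU
  have hFφ : ∀ i, AnalyticAt ℝ (F i ∘ φ) 0 := fun i => hφ.comp_analyticAt (hF i)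
  have hzero : ∀ i, i ∉ s → ∀ᶠ x in 𝓝 0, (F i ∘ φ) x = 0 := fun i hi => by
    simp only [hs, Finset.mem_filter, Finset.mem_univ, true_and, not_not] at hi
    exact hφ.tendsto.eventually hi
  rcases hM with hM | ⟨α, u, hu, hu0, hM⟩
  · obtain ⟨i, his, hi⟩ := eventually_zero_of_prod hFφ s hM
    have hlt : (Finset.univ.filter fun i => ¬ ∀ᶠ x in 𝓝 0, (F i ∘ φ) x = 0).card < m := by
      rw [← hm]
      refine Finset.card_lt_card ⟨fun j hj => ?_, fun hsub => ?_⟩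
      · by_contra hjs
        exact (Finset.mem_filter.1 hj).2 (hzero j hjs)
      · exact (Finset.mem_filter.1 (hsub his)).2 hi
    obtain ⟨ψ, W, hψ, hW⟩ := ih _ hlt (fun i => F i ∘ φ) hFφ rfl V hφ.le_nhds
    exact ⟨φ ∘ ψ, W, hφ.comp hψ, hW⟩
  · refine ⟨φ, V, hφ, fun i => ?_⟩
    by_cases hi : i ∈ s
    · right
      refine NormalCrossing.of_mul _ (α := α) (hFφ i) (g := fun x => ∏ j ∈ s.erase i, (F j ∘ φ) x)
        (Finset.analyticAt_fun_prod _ fun j _ => hFφ j) hu hu0 rfl ?_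
      filter_upwards [hM] with x hx
      rw [← hx, Finset.mul_prod_erase s (fun j => (F j ∘ φ) x) hi]
      rfl
    · exact Or.inl (hzero i hi)

/-! ### Elementary substitutions: ramification and blow-up -/

section
variable {n : ℕ}

theorem analyticAt_comp_fst {E : Type*} [NormedAddCommGroup E] [NormedSpace ℝ E] {a : E → ℝ}
    (ha : AnalyticAt ℝ a 0) : AnalyticAt ℝ (fun z : E × ℝ => a z.1) 0 :=
  ha.comp_of_eq (f := fun z : E × ℝ => z.1) (by fun_prop) rfl

theorem analyticAt_mon_comp {E : Type*} [NormedAddCommGroup E] [NormedSpace ℝ E]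
    {φ : E → (Fin n → ℝ)} {x : E} (h : AnalyticAt ℝ φ x) (α : Fin n → ℕ) :
    AnalyticAt ℝ (fun x => mon α (φ x)) x := (analyticAt_mon α _).comp h

/-- Identification of `ℝⁿ × ℝ` with `ℝⁿ⁺¹`, the last factor becoming the coordinate `0`. -/
theorem admissible_flatten {U : Ultrafilter ((Fin n → ℝ) × ℝ)}
    (hU : (U : Filter ((Fin n → ℝ) × ℝ)) ≤ 𝓝 0) :
    Admissible U (fun w : Fin (n + 1) → ℝ => ((fun i => w i.succ : Fin n → ℝ), w 0))
      (U.map fun z => Fin.cons z.2 z.1) := by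
  refine Admissible.of_section _ ?_ rfl ?_ (by simp)
  · refine AnalyticAt.prod ?_ (by fun_prop)
    exact AnalyticAt.pi fun i => by fun_prop
  · refine Tendsto.mono_left ?_ hU
    have : Continuous fun z : (Fin n → ℝ) × ℝ => (Fin.cons z.2 z.1 : Fin (n + 1) → ℝ) := by
      refine continuous_pi fun i => ?_
      refine Fin.cases ?_ (fun i => ?_) i <;> simp <;> fun_prop
    refine this.tendsto' 0 0 ?_
    ext i
    refine Fin.cases ?_ (fun i => ?_) i <;> simp

theorem Resolvable.zero {U : Ultrafilter ((Fin n → ℝ) × ℝ)}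
    (hU : (U : Filter ((Fin n → ℝ) × ℝ)) ≤ 𝓝 0) {h : (Fin n → ℝ) × ℝ → ℝ}
    (he : ∀ᶠ z in 𝓝 0, h z = 0) : Resolvable (n + 1) U h :=
  ⟨_, _, admissible_flatten hU, Or.inl ((admissible_flatten hU).tendsto.eventually he)⟩

theorem Resolvable.monomial {U : Ultrafilter ((Fin n → ℝ) × ℝ)}
    (hU : (U : Filter ((Fin n → ℝ) × ℝ)) ≤ 𝓝 0) {h u : (Fin n → ℝ) × ℝ → ℝ} {α : Fin n → ℕ} {m : ℕ}
    (hu : AnalyticAt ℝ u 0) (hu0 : u 0 ≠ 0)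
    (he : ∀ᶠ z in 𝓝 0, h z = mon α z.1 * z.2 ^ m * u z) : Resolvable (n + 1) U h := by
  have hφ := admissible_flatten hU
  refine ⟨_, _, hφ, Or.inr ⟨Fin.cons m α, _, hφ.comp_analyticAt hu, ?_, ?_⟩⟩
  · rw [Function.comp_apply, hφ.map_zero]; exact hu0
  · filter_upwards [hφ.tendsto.eventually he] with w hw
    rw [Function.comp_apply, hw]
    simp only [mon, Fin.prod_univ_succ, Fin.cons_zero, Fin.cons_succ, Function.comp_apply]
    ring

/-- A substitution in the base variables extends to the product with the last variable. -/
theorem Admissible.lift {E F : Type*} [NormedAddCommGroup E] [NormedSpace ℝ E]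
    [NormedAddCommGroup F] [NormedSpace ℝ F] {U : Ultrafilter (F × ℝ)} {φ : E → F}
    {V : Ultrafilter E} (hU : (U : Filter (F × ℝ)) ≤ 𝓝 0) (h : Admissible (U.map Prod.fst) φ V) :
    ∃ V', Admissible U (fun z : E × ℝ => (φ z.1, z.2)) V' := by
  obtain ⟨s, rfl, hs⟩ := h.exists_section
  refine ⟨_, Admissible.of_section (fun z => (s z.1, z.2)) ?_ (by simp [h.map_zero]) ?_ ?_⟩
  · have : AnalyticAt ℝ (fun z : E × ℝ => φ z.1) 0 :=
      h.analytic.comp_of_eq (f := fun z : E × ℝ => z.1) (by fun_prop) rfl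
    exact AnalyticAt.prod this analyticAt_snd
  · have h1 : Tendsto (fun z : F × ℝ => s z.1) U (𝓝 0) := h.le_nhds
    have h2 : Tendsto (fun z : F × ℝ => z.2) U (𝓝 0) :=
      (continuous_snd.tendsto' 0 0 rfl).mono_left hU
    exact h1.prodMk_nhds h2
  · have : ∀ᶠ z : F × ℝ in U, φ (s z.1) = z.1 := hs
    filter_upwards [this] with z hz
    ext1 <;> simp [hz]

/-- The ramification `x i ↦ ± x i ^ N`, with the signs chosen so that its image contains
`U`-almost every point; an ultrafilter gives each coordinate a definite sign. -/
theorem admissible_ramify {U : Ultrafilter (Fin n → ℝ)} (hU : (U : Filter (Fin n → ℝ)) ≤ 𝓝 0)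
    {N : ℕ} (hN : N ≠ 0) : ∃ (ε : Fin n → ℝ) (V : Ultrafilter (Fin n → ℝ)), (∀ i, ε i ≠ 0) ∧
      Admissible U (fun x i => ε i * x i ^ N) V := by
  classical
  let ε : Fin n → ℝ := fun i => if ∀ᶠ x : Fin n → ℝ in U, 0 ≤ x i then 1 else -1
  refine ⟨ε, _, fun i => by simp only [ε]; split_ifs <;> norm_num,
    Admissible.of_section (fun x i => |x i| ^ ((N : ℝ)⁻¹)) ?_ (by ext; simp [hN]) ?_ ?_⟩
  · exact AnalyticAt.pi fun i => by fun_prop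
  · refine Tendsto.mono_left ?_ hU
    have hN' : (0:ℝ) ≤ (N:ℝ)⁻¹ := by positivity
    have : Continuous fun (x : Fin n → ℝ) i => |x i| ^ ((N : ℝ)⁻¹) :=
      continuous_pi fun i => (Real.continuous_rpow_const hN').comp (by fun_prop)
    refine this.tendsto' 0 0 ?_
    ext i
    simp [Real.zero_rpow, hN]
  · have : ∀ i, ∀ᶠ x : Fin n → ℝ in U, ε i * |x i| = x i := fun i => by
      simp only [ε]
      split_ifs with h
      · filter_upwards [h] with x hx
        rw [one_mul, abs_of_nonneg hx]
      · filter_upwards [Ultrafilter.eventually_not.2 h] with x hx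
        rw [abs_of_neg (not_le.1 hx)]; ring
    filter_upwards [eventually_all.2 this] with x hx
    ext i
    rw [Real.rpow_inv_natCast_pow (abs_nonneg _) hN, hx]

theorem mon_mul (α : Fin n → ℕ) (x y : Fin n → ℝ) : mon α (fun i => x i * y i) = mon α x * mon α y := by
  simp [mon, mul_pow, Finset.prod_mul_distrib]

theorem mon_pow_right (α : Fin n → ℕ) (x : Fin n → ℝ) (N : ℕ) :
    mon α (fun i => x i ^ N) = mon α x ^ N := by
  simp [mon, ← Finset.prod_pow, ← pow_mul, mul_comm]

/-- Scaling the coordinate `i` by `y` multiplies `x ^ α` by `y ^ α i`. -/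
theorem mon_update (α : Fin n → ℕ) (x : Fin n → ℝ) (i : Fin n) (y : ℝ) :
    mon α (Function.update x i (y * x i)) = y ^ α i * mon α x := by
  have : Function.update x i (y * x i) = fun k => (Function.update 1 i y : Fin n → ℝ) k * x k := by
    ext k
    by_cases h : k = i
    · subst h; simp
    · simp [h]
  rw [this, mon_mul]
  congr 1
  rw [mon, Finset.prod_eq_single i] <;> simp +contextual

/-- The chart of the blow-up of `x i = z.2 = 0` in which `z.2` generates the exceptional divisor,
used when `x i / z.2` tends to `0` along `U`. Where `z.2 = 0` the quotient has the junk value `0`,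
which still gives a section because `x i = 0` there. -/
theorem admissible_blowup_snd {U : Ultrafilter ((Fin n → ℝ) × ℝ)}
    (hU : (U : Filter ((Fin n → ℝ) × ℝ)) ≤ 𝓝 0) (i : Fin n)
    (h0 : ∀ᶠ z : (Fin n → ℝ) × ℝ in U, z.2 = 0 → z.1 i = 0) (ht : Tendsto (fun z : (Fin n → ℝ) × ℝ => z.1 i / z.2) U (𝓝 0)) :
    ∃ V, Admissible U (fun z : (Fin n → ℝ) × ℝ => (Function.update z.1 i (z.2 * z.1 i), z.2)) V := by
  refine ⟨_, Admissible.of_section (fun z => (Function.update z.1 i (z.1 i / z.2), z.2)) ?_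
    (by simp) ?_ ?_⟩
  · refine AnalyticAt.prod (AnalyticAt.pi fun k => ?_) (by fun_prop)
    have hk : ∀ k, AnalyticAt ℝ (fun z : (Fin n → ℝ) × ℝ => z.1 k) 0 := fun k =>
      analyticAt_comp_fst (analyticAt_eval k 0)
    by_cases h : k = i
    · subst h; simpa using AnalyticAt.fun_mul (analyticAt_snd (𝕜 := ℝ)) (hk k)
    · simpa [h] using hk k
  · have h1 : Tendsto (fun z : (Fin n → ℝ) × ℝ => z.1) U (𝓝 0) :=
      (continuous_fst.tendsto' 0 0 rfl).mono_left hU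
    have h2 : Tendsto (fun z : (Fin n → ℝ) × ℝ => z.2) U (𝓝 0) :=
      (continuous_snd.tendsto' 0 0 rfl).mono_left hU
    refine Tendsto.prodMk_nhds ?_ h2
    simpa using h1.update i ht
  · filter_upwards [h0] with z hz
    ext k
    · by_cases h : k = i
      · subst h
        by_cases hz2 : z.2 = 0
        · simp [hz2, hz hz2]
        · simp; field_simp
      · simp [h]
    · simp

/-- The charts of the blow-up of `x i = z.2 = 0` in which `x i` generates the exceptional divisor,
used when `z.2 / x i` tends to a finite `c` along `U`; the chart is centred at `c`. -/
theorem admissible_blowup_fst {U : Ultrafilter ((Fin n → ℝ) × ℝ)}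
    (hU : (U : Filter ((Fin n → ℝ) × ℝ)) ≤ 𝓝 0) (i : Fin n) (c : ℝ)
    (h0 : ∀ᶠ z : (Fin n → ℝ) × ℝ in U, z.1 i ≠ 0) (ht : Tendsto (fun z : (Fin n → ℝ) × ℝ => z.2 / z.1 i) U (𝓝 c)) :
    ∃ V, Admissible U (fun z : (Fin n → ℝ) × ℝ => (z.1, z.1 i * (c + z.2))) V := by
  refine ⟨_, Admissible.of_section (fun z => (z.1, z.2 / z.1 i - c)) ?_ (by simp) ?_ ?_⟩
  · have := analyticAt_comp_fst (analyticAt_eval i 0)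
    fun_prop
  · have h1 : Tendsto (fun z : (Fin n → ℝ) × ℝ => z.1) U (𝓝 0) :=
      (continuous_fst.tendsto' 0 0 rfl).mono_left hU
    refine h1.prodMk_nhds ?_
    simpa using ht.sub_const c
  · filter_upwards [h0] with z hz
    ext1
    · simp
    · simp; field_simp

/-- By compactness of the projective line, `U` is centred in one of the charts of the blow-up. -/
theorem blowup_dichotomy (U : Ultrafilter ((Fin n → ℝ) × ℝ)) (i : Fin n) :
    ((∀ᶠ z : (Fin n → ℝ) × ℝ in U, z.2 = 0 → z.1 i = 0) ∧ Tendsto (fun z : (Fin n → ℝ) × ℝ => z.1 i / z.2) U (𝓝 0)) ∨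
    ∃ c : ℝ, (∀ᶠ z : (Fin n → ℝ) × ℝ in U, z.1 i ≠ 0) ∧ Tendsto (fun z : (Fin n → ℝ) × ℝ => z.2 / z.1 i) U (𝓝 c) := by
  by_cases h0 : ∀ᶠ z : (Fin n → ℝ) × ℝ in U, z.1 i = 0
  · refine Or.inl ⟨h0.mono fun z hz _ => hz, tendsto_const_nhds.congr' ?_⟩
    filter_upwards [h0] with z hz
    simp [hz]
  have h0' : ∀ᶠ z : (Fin n → ℝ) × ℝ in U, z.1 i ≠ 0 := Ultrafilter.eventually_not.2 h0
  by_cases hb : ∃ M : ℝ, ∀ᶠ z : (Fin n → ℝ) × ℝ in U, z.2 / z.1 i ∈ Metric.closedBall 0 M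
  · obtain ⟨M, hM⟩ := hb
    obtain ⟨c, -, hc⟩ := (isCompact_closedBall (0:ℝ) M).ultrafilter_le_nhds
      (U.map fun z => z.2 / z.1 i) (by rw [Filter.le_principal_iff]; exact hM)
    exact Or.inr ⟨c, h0', hc⟩
  · push Not at hb
    have hb' : ∀ M : ℝ, ∀ᶠ z : (Fin n → ℝ) × ℝ in U, M < |z.2 / z.1 i| := fun M => by
      filter_upwards [hb M] with z hz
      simpa [abs_div] using hz
    refine Or.inl ⟨?_, ?_⟩
    · filter_upwards [hb' 0] with z hz hz2
      simp [hz2] at hz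
    · have : Tendsto (fun z : (Fin n → ℝ) × ℝ => |z.2 / z.1 i|) U atTop :=
        tendsto_atTop.2 fun M => (hb' M).mono fun z hz => hz.le
      refine (tendsto_zero_iff_abs_tendsto_zero _).2 ((tendsto_inv_atTop_zero.comp this).congr fun z => ?_)
      simp [abs_div]
end

/-! ### Lowering the order by blow-ups -/

section
variable {n : ℕ}

/-- A polynomial of degree `k + 1` without term of degree `k`, and not just a multiple of
`X ^ (k + 1)`, has no root of multiplicity `k + 1`: the polynomial `(X - r) ^ (k + 1)` has a nonzero
term of degree `k` unless `r = 0`. This is how the Tschirnhausen form lowers the order. -/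
theorem regular_polynomial (k : ℕ) (c : ℕ → ℝ) {u0 : ℝ} (hu0 : u0 ≠ 0) (hc : ∃ j < k, c j ≠ 0) (r : ℝ) :
    ∃ m < k + 1, ∃ v : ℝ → ℝ, AnalyticAt ℝ v 0 ∧ v 0 ≠ 0 ∧
      ∀ t, ∑ j ∈ Finset.range k, c j * (r + t) ^ j + (r + t) ^ (k + 1) * u0 = t ^ m * v t := by
  open Polynomial in
  set p : ℝ[X] := ∑ j ∈ Finset.range k, C (c j) * X ^ j + C u0 * X ^ (k + 1) with hp
  have hcoef : ∀ l, p.coeff l = (if l < k then c l else 0) + if l = k + 1 then u0 else 0 := fun l => by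
    simp [hp, Polynomial.coeff_X_pow]
  have hp0 : p ≠ 0 := fun h => by
    have := hcoef (k + 1)
    simp [h] at this
    exact hu0 this.symm
  have heval : ∀ t, ∑ j ∈ Finset.range k, c j * (r + t) ^ j + (r + t) ^ (k + 1) * u0 = p.eval (r + t) :=
    fun t => by
      simp only [hp, Polynomial.eval_add, Polynomial.eval_finsetSum, Polynomial.eval_mul,
        Polynomial.eval_C, Polynomial.eval_pow, Polynomial.eval_X]
      ring
  obtain ⟨q, hq, hndvd⟩ := Polynomial.exists_eq_pow_rootMultiplicity_mul_and_not_dvd p hp0 r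
  set m := p.rootMultiplicity r with hm
  have hq0 : q.eval r ≠ 0 := fun h => hndvd (Polynomial.dvd_iff_isRoot.2 h)
  refine ⟨m, ?_, fun t => q.eval (r + t), ?_, by simpa using hq0, fun t => ?_⟩
  · by_contra! hkm
    have hdeg : p.natDegree ≤ k + 1 := Polynomial.natDegree_le_iff_coeff_eq_zero.2 fun l hl => by
      rw [hcoef, if_neg (by omega), if_neg (by omega), add_zero]
    have hqne : q ≠ 0 := fun h => by simp [h] at hq0
    have hdeg2 : p.natDegree = m + q.natDegree := by
      conv_lhs => rw [hq]
      rw [Polynomial.natDegree_mul (pow_ne_zero _ (Polynomial.X_sub_C_ne_zero r)) hqne]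
      simp
    have hmk : m = k + 1 := by omega
    obtain ⟨a, rfl⟩ := Polynomial.natDegree_eq_zero.1 (show q.natDegree = 0 by omega)
    have ha : a ≠ 0 := by simpa using hq0
    rw [hmk] at hq
    have hr : r = 0 := by
      have h1 := hcoef k
      rw [hq, Polynomial.coeff_mul_C, sub_eq_add_neg, ← Polynomial.C_neg,
        Polynomial.coeff_X_add_C_pow] at h1
      simp [ha] at h1
      rcases h1 with h1 | h1
      · exact h1
      · exact absurd h1 (by positivity)
    obtain ⟨j, hj, hcj⟩ := hc
    have h1 := hcoef j
    rw [hq, hr, Polynomial.coeff_mul_C, map_zero, sub_zero, Polynomial.coeff_X_pow, if_neg (by omega),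
      if_pos hj, if_neg (by omega)] at h1
    exact hcj (by simpa using h1.symm)
  · have : AnalyticAt ℝ (fun t : ℝ => Polynomial.aeval t (q.comp (Polynomial.C r + Polynomial.X))) 0 :=
      analyticAt_id.aeval_polynomial _
    simpa using this
  · rw [heval]
    conv_lhs => rw [hq]
    simp

/-- Functions `g z.1 * f z`, with `f` regular of order `d` in the last variable, can be
monomialized. The factor `g` absorbs the exceptional divisors of the blow-ups. -/
def RegularResolution (n d : ℕ) : Prop :=
  ∀ f : (Fin n → ℝ) × ℝ → ℝ, AnalyticAt ℝ f 0 → RegularOrder d f →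
  ∀ g : (Fin n → ℝ) → ℝ, AnalyticAt ℝ g 0 →
  ∀ U : Ultrafilter ((Fin n → ℝ) × ℝ), (U : Filter ((Fin n → ℝ) × ℝ)) ≤ 𝓝 0 →
    Resolvable (n + 1) U fun z => g z.1 * f z

theorem map_fst_le {U : Ultrafilter ((Fin n → ℝ) × ℝ)}
    (hU : (U : Filter ((Fin n → ℝ) × ℝ)) ≤ 𝓝 0) :
    ((U.map Prod.fst : Ultrafilter (Fin n → ℝ)) : Filter (Fin n → ℝ)) ≤ 𝓝 0 :=
  (continuous_fst.tendsto' (0 : (Fin n → ℝ) × ℝ) 0 rfl).mono_left hU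

theorem tendsto_fst_zero {E : Type*} [NormedAddCommGroup E] :
    Tendsto (fun z : E × ℝ => z.1) (𝓝 0) (𝓝 0) := continuous_fst.tendsto' 0 0 rfl

theorem regularResolution_zero (H : FamilyResolution n) : RegularResolution n 0 := by
  intro f hf hreg g hg U hU
  obtain ⟨v, hv, hv0, hfv⟩ := hreg
  have hf0 : f 0 ≠ 0 := by
    have := hfv.self_of_nhds
    simp only [pow_zero, one_mul, Prod.mk_zero_zero] at this
    rwa [this]
  obtain ⟨φ, V, hφ, hM⟩ := H Unit (fun _ => g) (fun _ => hg) _ (map_fst_le hU)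
  obtain ⟨V', hV'⟩ := hφ.lift hU
  refine Resolvable.of_pullback hV' ?_
  rcases hM () with hM | ⟨α, w, hw, hw0, hM⟩
  · refine Resolvable.zero hV'.le_nhds ?_
    filter_upwards [tendsto_fst_zero.eventually hM] with z hz
    simp only [Function.comp_apply] at hz ⊢
    rw [hz, zero_mul]
  · refine Resolvable.monomial hV'.le_nhds (u := fun z => w z.1 * f (φ z.1, z.2)) (α := α) (m := 0)
      ((analyticAt_comp_fst hw).mul (hV'.comp_analyticAt hf)) (mul_ne_zero hw0 ?_) ?_
    · simpa [hφ.map_zero, ← Prod.zero_eq_mk] using hf0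
    · filter_upwards [tendsto_fst_zero.eventually hM] with z hz
      simp only [Function.comp_apply] at hz ⊢
      rw [hz, pow_zero]
      ring

/-- Monomialization of `x ^ γ * w * (∑ j < k, a j * (x ^ β) ^ (k + 1 - j) * t ^ j + t ^ (k + 1) * u)`
when some `a j` is a unit, by induction on the degree `N` of `x ^ β`. Blow up `x i = t = 0` for some
`x i` dividing `x ^ β`. If `t` dominates, the bracket becomes `t ^ (k + 1)` times a unit. Otherwise,
substituting `t = x i * (c + t')` divides `x ^ β` by `x i`. If nothing is left of `x ^ β`, the order
is at most `k` by `regular_polynomial`; if something is left and `c ≠ 0`, the bracket is a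
unit; if something is left and `c = 0`, the induction hypothesis on `N` applies. -/
theorem resolvable_weighted {k : ℕ} (IH : ∀ m < k + 1, RegularResolution n m) (N : ℕ) :
    ∀ (β γ : Fin n → ℕ) (w : (Fin n → ℝ) → ℝ) (a : ℕ → (Fin n → ℝ) → ℝ) (u : (Fin n → ℝ) × ℝ → ℝ)
      (U : Ultrafilter ((Fin n → ℝ) × ℝ)), ∑ i, β i = N → β ≠ 0 → AnalyticAt ℝ w 0 → w 0 ≠ 0 →
      (∀ j, AnalyticAt ℝ (a j) 0) → AnalyticAt ℝ u 0 → u 0 ≠ 0 → (∃ j < k, a j 0 ≠ 0) →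
      (U : Filter ((Fin n → ℝ) × ℝ)) ≤ 𝓝 0 →
      Resolvable (n + 1) U fun z => mon γ z.1 * w z.1 *
        (∑ j ∈ Finset.range k, a j z.1 * mon β z.1 ^ (k + 1 - j) * z.2 ^ j + z.2 ^ (k + 1) * u z) := by
  induction N with
  | zero =>
    intro β γ w a u U hβ hβ0
    refine absurd ?_ hβ0
    ext i
    simpa using (Finset.sum_eq_zero_iff.1 hβ) i
  | succ N ihN =>
  intro β γ w a u U hβ hβ0 hw hw0 ha hu hu0 hj0 hU
  obtain ⟨i, hi⟩ : ∃ i, β i ≠ 0 := Function.ne_iff.1 hβ0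
  rcases blowup_dichotomy U i with ⟨h1, h2⟩ | ⟨c, h1, h2⟩
  · obtain ⟨V, hV⟩ := admissible_blowup_snd hU i h1 h2
    refine Resolvable.of_pullback hV ?_
    obtain ⟨b, hb⟩ := Nat.exists_eq_succ_of_ne_zero hi
    set φ : (Fin n → ℝ) × ℝ → (Fin n → ℝ) := fun z => Function.update z.1 i (z.2 * z.1 i) with hφ
    have hφa : AnalyticAt ℝ φ 0 := analyticAt_fst.comp_of_eq hV.analytic rfl
    have hφ0 : φ 0 = 0 := by simp [hφ]
    refine Resolvable.monomial hV.le_nhds (α := γ) (m := γ i + (k + 1))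
      (u := fun z => w (φ z) * (∑ j ∈ Finset.range k, a j (φ z) *
        (z.2 ^ b * mon β z.1) ^ (k + 1 - j) + u (φ z, z.2))) ?_ ?_ (Eventually.of_forall fun z => ?_)
    · have e1 := hw.comp_of_eq hφa hφ0
      have e2 : AnalyticAt ℝ (fun z => u (φ z, z.2)) 0 := hV.comp_analyticAt hu
      have e3 : ∀ j, AnalyticAt ℝ (fun z => a j (φ z)) 0 := fun j => (ha j).comp_of_eq hφa hφ0
      have e4 : AnalyticAt ℝ (fun z : (Fin n → ℝ) × ℝ => mon β z.1) 0 :=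
        analyticAt_comp_fst (analyticAt_mon β 0)
      refine e1.mul ((Finset.analyticAt_fun_sum _ fun j _ => ?_).add e2)
      exact (e3 j).mul (((analyticAt_snd.pow b).mul e4).pow _)
    · have hm : mon β (0 : Fin n → ℝ) = 0 := mon_eq_zero i hi rfl
      rw [hφ0, Finset.sum_eq_zero, zero_add]
      · exact mul_ne_zero hw0 hu0
      · intro j hj
        have : k + 1 - j ≠ 0 := by have := Finset.mem_range.1 hj; omega
        simp [hm, this]
    · simp only [Function.comp_apply]
      rw [mon_update γ z.1 i z.2, mon_update β z.1 i z.2, hb]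
      have : ∀ j ∈ Finset.range k, a j (φ z) * (z.2 ^ (b + 1) * mon β z.1) ^ (k + 1 - j) * z.2 ^ j
          = z.2 ^ (k + 1) * (a j (φ z) * (z.2 ^ b * mon β z.1) ^ (k + 1 - j)) := fun j hj => by
        obtain ⟨l, hl⟩ : ∃ l, k + 1 = j + l := ⟨k + 1 - j, by have := Finset.mem_range.1 hj; omega⟩
        rw [hl, Nat.add_sub_cancel_left, pow_add z.2 j l]
        ring
      rw [Finset.sum_congr rfl this, ← Finset.mul_sum, pow_add]
      ring
  · obtain ⟨V, hV⟩ := admissible_blowup_fst hU i c h1 h2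
    refine Resolvable.of_pullback hV ?_
    obtain ⟨β', rfl⟩ := mon_split i hi
    set u' : (Fin n → ℝ) × ℝ → ℝ := fun z => u (z.1, z.1 i * (c + z.2)) with hu'
    have hu'a : AnalyticAt ℝ u' 0 := hV.comp_analyticAt hu
    have hu'0 : u' 0 = u 0 := by simp [hu', ← Prod.zero_eq_mk]
    set f' : (Fin n → ℝ) × ℝ → ℝ := fun z => ∑ j ∈ Finset.range k,
      a j z.1 * mon β' z.1 ^ (k + 1 - j) * (c + z.2) ^ j + (c + z.2) ^ (k + 1) * u' z with hf'
    have hf'a : AnalyticAt ℝ f' 0 := by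
      refine AnalyticAt.add (Finset.analyticAt_fun_sum _ fun j _ => ?_) (by fun_prop)
      have e3 := analyticAt_comp_fst (ha j)
      have e4 : AnalyticAt ℝ (fun z : (Fin n → ℝ) × ℝ => mon β' z.1) 0 :=
        analyticAt_comp_fst (analyticAt_mon β' 0)
      fun_prop
    have hkey : ∀ᶠ z : (Fin n → ℝ) × ℝ in 𝓝 0, mon (γ + (k + 1) • Pi.single i 1) z.1 * w z.1 * f' z =
        ((fun z : (Fin n → ℝ) × ℝ => mon γ z.1 * w z.1 * (∑ j ∈ Finset.range k,
          a j z.1 * mon (Pi.single i 1 + β') z.1 ^ (k + 1 - j) * z.2 ^ j + z.2 ^ (k + 1) * u z)) ∘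
          fun z => (z.1, z.1 i * (c + z.2))) z := Eventually.of_forall fun z => by
      simp only [Function.comp_apply, mon_add, mon_smul, mon_single]
      have : ∀ j ∈ Finset.range k, a j z.1 * (z.1 i * mon β' z.1) ^ (k + 1 - j) * (z.1 i * (c + z.2)) ^ j
          = z.1 i ^ (k + 1) * (a j z.1 * mon β' z.1 ^ (k + 1 - j) * (c + z.2) ^ j) := fun j hj => by
        obtain ⟨l, hl⟩ : ∃ l, k + 1 = j + l := ⟨k + 1 - j, by have := Finset.mem_range.1 hj; omega⟩
        rw [hl, Nat.add_sub_cancel_left, pow_add (z.1 i) j l, mul_pow (z.1 i) (c + z.2)]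
        ring
      rw [Finset.sum_congr rfl this, ← Finset.mul_sum, hf']
      simp only [hu', mul_pow (z.1 i) (c + z.2)]
      generalize (∑ j ∈ Finset.range k, _ : ℝ) = S
      ring
    refine Resolvable.congr ?_ hkey
    have hg : AnalyticAt ℝ (fun x => mon (γ + (k + 1) • Pi.single i 1) x * w x) 0 := by fun_prop
    have hu's : ∀ t : ℝ, u' (0, t) = u 0 := fun t => by simp [hu', ← Prod.zero_eq_mk]
    by_cases hβ' : β' = 0
    · subst hβ'
      obtain ⟨m, hm, v, hv, hv0, hpv⟩ := regular_polynomial k (fun j => a j 0) hu0 hj0 c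
      refine IH m hm f' hf'a ⟨v, hv, hv0, Eventually.of_forall fun t => ?_⟩ _ hg V hV.le_nhds
      rw [← hpv]
      simp [hf', mon_zero, hu's]
    · obtain ⟨l, hl⟩ : ∃ l, β' l ≠ 0 := Function.ne_iff.1 hβ'
      by_cases hc : c = 0
      · subst hc
        have := ihN β' (γ + (k + 1) • Pi.single i 1) w a u' V (by
          simp [Finset.sum_add_distrib] at hβ; omega) hβ' hw hw0 ha hu'a (by rwa [hu'0]) hj0 hV.le_nhds
        simpa [hf'] using this
      · refine IH 0 (by omega) f' hf'a ⟨fun t => (c + t) ^ (k + 1) * u 0, by fun_prop, ?_,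
          Eventually.of_forall fun t => ?_⟩ _ hg V hV.le_nhds
        · simp [hc, hu0]
        · have hm : mon β' (0 : Fin n → ℝ) = 0 := mon_eq_zero l hl rfl
          simp only [hf', hm, hu's, pow_zero, one_mul]
          rw [Finset.sum_eq_zero, zero_add]
          intro j hj
          have : k + 1 - j ≠ 0 := by have := Finset.mem_range.1 hj; omega
          simp [this]
end

/-! ### Local uniformization -/

section
variable {n : ℕ}

theorem mon_ramify (α : Fin n → ℕ) (ε x : Fin n → ℝ) (N : ℕ) :
    mon α (fun i => ε i * x i ^ N) = mon α ε * mon α x ^ N := by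
  rw [mon_mul α ε fun i => x i ^ N, mon_pow_right]

/-- A finite nonempty family of pairwise comparable elements has a least element. -/
theorem exists_least {ι α : Type*} [PartialOrder α] (s : Finset ι) (hs : s.Nonempty) (B : ι → α)
    (h : ∀ i ∈ s, ∀ j ∈ s, B i ≤ B j ∨ B j ≤ B i) : ∃ i ∈ s, ∀ j ∈ s, B i ≤ B j := by
  obtain ⟨i, hi, hmin⟩ := s.exists_minimalFor B hs
  exact ⟨i, hi, fun j hj => (h i hi j hj).elim id fun hji => hmin hj hji⟩

/-- The induction step on the order. Put `f` in Tschirnhausen form with coefficients `a j`. In the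
base variables, monomialize simultaneously `g`, the `a j` and the differences of their powers
`a j ^ M j`, where `(k + 1 - j) * M j = N`, so that the exponents of the `a j ^ M j` are totally
ordered (`exponents_comparable`). If `x ^ β` is the least of them, then after a ramification of
order `N` each `a j` is divisible by `(x ^ β) ^ (k + 1 - j)`, with unit quotient for the minimizing
`j`, which is the situation of `resolvable_weighted`. -/
theorem regularResolution_succ {k : ℕ} (H : FamilyResolution n)
    (IH : ∀ m < k + 1, RegularResolution n m) : RegularResolution n (k + 1) := by
  classical
  intro f hf hreg g hg U hU
  obtain ⟨h, hh, hh0, a, u, ha, hu, hu0, ha0, hfe⟩ := tschirnhausen hf hreg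
  have hhf := analyticAt_comp_fst hh
  have hT : Admissible U (fun z : (Fin n → ℝ) × ℝ => (z.1, z.2 + h z.1))
      (U.map fun z => (z.1, z.2 - h z.1)) := by
    refine Admissible.of_section _ (by fun_prop) (by simp [hh0]) ?_ (by simp)
    refine Tendsto.mono_left ?_ hU
    have : AnalyticAt ℝ (fun z : (Fin n → ℝ) × ℝ => (z.1, z.2 - h z.1)) 0 := by fun_prop
    simpa [hh0, ← Prod.zero_eq_mk] using this.continuousAt.tendsto
  refine Resolvable.of_pullback hT ?_
  generalize (U.map fun z => (z.1, z.2 - h z.1)) = V at hT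
  have hV := hT.le_nhds
  clear hT hU
  refine Resolvable.congr (f := fun z => g z.1 *
    (∑ j ∈ Finset.range k, a j z.1 * z.2 ^ j + z.2 ^ (k + 1) * u z)) ?_ (by
      filter_upwards [hfe] with z hz
      simp only [Function.comp_apply]
      rw [hz])
  -- `N` is divisible by every weight `k + 1 - j`, so that all `M j` are integers.
  set N := (k + 1).factorial with hN
  have hN0 : N ≠ 0 := Nat.factorial_ne_zero _
  set M : ℕ → ℕ := fun j => N / (k + 1 - j) with hM
  have hMmul : ∀ j < k, (k + 1 - j) * M j = N := fun j hj =>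
    Nat.mul_div_cancel' (Nat.dvd_factorial (by omega) (by omega))
  obtain ⟨φ, W, hφ, hmon⟩ := H (Unit ⊕ Fin k ⊕ Fin k × Fin k)
    (Sum.elim (fun _ => g) (Sum.elim (fun j => a j)
      fun p x => a p.1 x ^ M p.1 - a p.2 x ^ M p.2)) (by
        rintro (_ | j | p)
        · exact hg
        · exact ha j
        · exact ((ha p.1).pow _).sub ((ha p.2).pow _)) _ (map_fst_le hV)
  obtain ⟨V', hV'⟩ := hφ.lift hV
  refine Resolvable.of_pullback hV' ?_
  have hV'le := hV'.le_nhds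
  have hua : AnalyticAt ℝ (fun z : (Fin n → ℝ) × ℝ => u (φ z.1, z.2)) 0 := hV'.comp_analyticAt hu
  have hua0 : u (φ 0, 0) ≠ 0 := by simpa [hφ.map_zero, ← Prod.zero_eq_mk] using hu0
  rcases hmon (Sum.inl ()) with hg0 | ⟨γ, w, hw, hw0, hge⟩
  · refine Resolvable.zero hV'le ?_
    filter_upwards [tendsto_fst_zero.eventually hg0] with z hz
    simp only [Function.comp_apply, Sum.elim_inl] at hz ⊢
    rw [hz, zero_mul]
  have hfac : ∀ j : Fin k, ∃ (α : Fin n → ℕ) (v : (Fin n → ℝ) → ℝ), AnalyticAt ℝ v 0 ∧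
      ((¬ ∀ᶠ x in 𝓝 0, a j (φ x) = 0) → v 0 ≠ 0) ∧ ∀ᶠ x in 𝓝 0, a j (φ x) = mon α x * v x := fun j => by
    rcases hmon (Sum.inr (Sum.inl j)) with h0 | ⟨α, v, hv, hv0, he⟩
    · exact ⟨0, 0, analyticAt_const, fun h => absurd h0 h, by simpa using h0⟩
    · exact ⟨α, v, hv, fun _ => hv0, he⟩
  choose α v hv hv0 hav using hfac
  set J : Finset (Fin k) := Finset.univ.filter fun j => ¬ ∀ᶠ x in 𝓝 0, a j (φ x) = 0 with hJ
  have hnotJ : ∀ j : Fin k, j ∉ J → ∀ᶠ x in 𝓝 0, a j (φ x) = 0 := fun j hj => by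
    simpa [hJ] using hj
  have hvJ : ∀ j : Fin k, j ∈ J → v j 0 ≠ 0 := fun j hj => hv0 j (by simpa [hJ] using hj)
  rcases J.eq_empty_or_nonempty with hJe | hJne
  · refine Resolvable.monomial hV'le (α := γ) (m := k + 1)
      (u := fun z => w z.1 * u (φ z.1, z.2)) ((analyticAt_comp_fst hw).mul hua)
      (mul_ne_zero hw0 hua0) ?_
    have hall : ∀ᶠ x in 𝓝 0, ∀ j : Fin k, a j (φ x) = 0 :=
      eventually_all.2 fun j => hnotJ j (by simp [hJe])
    filter_upwards [tendsto_fst_zero.eventually hall, tendsto_fst_zero.eventually hge] with z h1 h2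
    simp only [Function.comp_apply, Sum.elim_inl] at h2 ⊢
    rw [h2, Finset.sum_eq_zero fun j hj => by rw [h1 ⟨j, Finset.mem_range.1 hj⟩, zero_mul]]
    ring
  -- `J` indexes the coefficients that do not vanish identically; their normalized exponents
  -- `M j • α j` are pairwise comparable.
  obtain ⟨j0, hj0, hmin⟩ := exists_least J hJne (fun j => M j • α j) fun i hi j hj => by
    refine exponents_comparable (u := fun x => v i x ^ M i) (v := fun x => v j x ^ M j)
      ((hv i).pow _) (pow_ne_zero _ (hvJ i hi)) ((hv j).pow _) (pow_ne_zero _ (hvJ j hj)) ?_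
    refine (hmon (Sum.inr (Sum.inr (i, j)))).congr ?_
    filter_upwards [hav i, hav j] with x h1 h2
    simp only [Function.comp_apply, Sum.elim_inr, h1, h2, mon_smul, mul_pow]
  set β := M j0 • α j0 with hβ
  -- `β ≠ 0` because the Tschirnhausen coefficients vanish at `0`.
  have hβ0 : β ≠ 0 := by
    have h1 := (hav j0).self_of_nhds
    rw [hφ.map_zero, ha0 j0 j0.2] at h1
    have h2 : mon (α j0) (0 : Fin n → ℝ) = 0 := by
      simpa [hvJ j0 hj0] using h1.symm
    have h3 : α j0 ≠ 0 := fun h => by simp [h, mon_zero] at h2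
    have h4 : M j0 ≠ 0 := fun h => hN0 (by rw [← hMmul j0 j0.2, h, mul_zero])
    exact smul_ne_zero h4 h3
  have hδ : ∀ j : Fin k, ∃ δ : Fin n → ℕ, (j ∈ J → M j • α j = β + δ) ∧ (j = j0 → δ = 0) := fun j => by
    by_cases hj : j ∈ J
    · refine ⟨M j • α j - β, fun _ => (add_tsub_cancel_of_le (hmin j hj)).symm, ?_⟩
      rintro rfl
      exact tsub_self _
    · exact ⟨0, fun h => absurd h hj, fun _ => rfl⟩
  choose δ hδ hδ0 using hδ
  obtain ⟨ε, W', hε, hW'⟩ := admissible_ramify (map_fst_le hV'le) hN0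
  obtain ⟨V'', hV''⟩ := hW'.lift hV'le
  refine Resolvable.of_pullback hV'' ?_
  set ρ : (Fin n → ℝ) → (Fin n → ℝ) := fun x i => ε i * x i ^ N with hρ
  have hεm : ∀ α : Fin n → ℕ, mon α ε ≠ 0 := fun α => mon_ne_zero fun i hi => absurd hi (hε i)
  -- The quotient of `a j` by `(x ^ β) ^ (k + 1 - j)` after the ramification.
  let b : ℕ → (Fin n → ℝ) → ℝ := fun j => if hj : j < k then
    if (⟨j, hj⟩ : Fin k) ∈ J then fun x => mon (α ⟨j, hj⟩) ε * mon (δ ⟨j, hj⟩) x ^ (k + 1 - j) *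
      v ⟨j, hj⟩ (ρ x) else 0 else 0
  have hρ0 : ρ 0 = 0 := hW'.map_zero
  have hb : ∀ j, AnalyticAt ℝ (b j) 0 := fun j => by
    simp only [b]
    split_ifs with h1 h2
    · have : AnalyticAt ℝ (fun x => v ⟨j, h1⟩ (ρ x)) 0 := hW'.comp_analyticAt (hv _)
      exact (analyticAt_const.mul ((analyticAt_mon _ 0).pow _)).mul this
    · exact analyticAt_const
    · exact analyticAt_const
  have hb0 : ∃ j < k, b j 0 ≠ 0 := by
    refine ⟨j0, j0.2, ?_⟩
    simp only [b, j0.2, dif_pos, Fin.eta, if_pos hj0, hδ0 j0 rfl, mon_zero, one_pow, mul_one, hρ0]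
    exact mul_ne_zero (hεm _) (hvJ j0 hj0)
  have hbe : ∀ᶠ x in 𝓝 0, ∀ j : Fin k, a j (φ (ρ x)) = b j x * mon β x ^ (k + 1 - j) := by
    refine eventually_all.2 fun j => ?_
    by_cases hj : j ∈ J
    · filter_upwards [hW'.tendsto.eventually (hav j)] with x hx
      rw [hx]
      simp only [b, j.2, dif_pos, Fin.eta, if_pos hj]
      rw [hρ, mon_ramify]
      have : mon (α j) x ^ N = (mon β x * mon (δ j) x) ^ (k + 1 - j) := by
        rw [← mon_add, ← hδ j hj, mon_smul, ← pow_mul, mul_comm, hMmul j j.2]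
      rw [this]
      ring
    · filter_upwards [hW'.tendsto.eventually (hnotJ j hj)] with x hx
      rw [hx]
      simp [b, hj]
  refine Resolvable.congr (resolvable_weighted IH _ β (N • γ) (fun x => mon γ ε * w (ρ x)) b
    (fun z => u (φ (ρ z.1), z.2)) V'' rfl hβ0 (analyticAt_const.mul (hW'.comp_analyticAt hw))
    (mul_ne_zero (hεm _) (by rwa [hρ0])) hb (hV''.comp_analyticAt hua) ?_ hb0 hV''.le_nhds) ?_
  · simpa [hρ0] using hua0
  · filter_upwards [tendsto_fst_zero.eventually hbe,
      tendsto_fst_zero.eventually (hW'.tendsto.eventually hge)] with z h1 h2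
    simp only [Function.comp_apply, Sum.elim_inl] at h2 ⊢
    rw [h2, hρ, mon_ramify, mon_smul]
    have h3 : ∀ j ∈ Finset.range k, a j (φ (ρ z.1)) * z.2 ^ j
        = b j z.1 * mon β z.1 ^ (k + 1 - j) * z.2 ^ j := fun j hj => by
      rw [h1 ⟨j, Finset.mem_range.1 hj⟩]
    rw [Finset.sum_congr rfl h3]
    ring

theorem regularResolution (H : FamilyResolution n) (d : ℕ) : RegularResolution n d := by
  induction d using Nat.strong_induction_on with
  | _ d ih =>
    rcases d with _ | k
    · exact regularResolution_zero H
    · exact regularResolution_succ H ih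

/-- An analytic function that is not identically zero near `0` is not identically zero near `0`
on some line through `0`. -/
theorem exists_line {E : Type*} [NormedAddCommGroup E] [NormedSpace ℝ E] {f : E → ℝ}
    (hf : AnalyticAt ℝ f 0) (h : ¬ ∀ᶠ x in 𝓝 0, f x = 0) :
    ∃ v : E, ¬ ∀ᶠ t : ℝ in 𝓝 0, f (t • v) = 0 := by
  obtain ⟨r, hr, hball⟩ := Metric.eventually_nhds_iff_ball.1 hf.eventually_analyticAt
  obtain ⟨x, hx, hxb⟩ := ((not_eventually.1 h).and_eventually (Metric.ball_mem_nhds (0:E) hr)).exists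
  refine ⟨x, fun h0 => hx ?_⟩
  have hmem : ∀ t ∈ Set.Icc (0:ℝ) 1, t • x ∈ Metric.ball (0:E) r := fun t ht => by
    rw [mem_ball_zero_iff, norm_smul, Real.norm_of_nonneg ht.1]
    have hxb : ‖x‖ < r := mem_ball_zero_iff.1 hxb
    nlinarith [norm_nonneg x, ht.2]
  have ha : AnalyticOnNhd ℝ (fun t : ℝ => f (t • x)) (Set.Icc 0 1) := fun t ht =>
    (hball _ (hmem t ht)).comp_of_eq (f := fun t : ℝ => t • x)
      ((analyticAt_id (𝕜 := ℝ)).smul analyticAt_const) rfl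
  have := ha.eqOn_zero_of_preconnected_of_eventuallyEq_zero isPreconnected_Icc
    (Set.left_mem_Icc.2 zero_le_one) h0 (Set.right_mem_Icc.2 zero_le_one)
  simpa using this

theorem exists_prod_equiv {v : Fin (n + 1) → ℝ} (hv : v ≠ 0) :
    ∃ L : ((Fin n → ℝ) × ℝ) ≃L[ℝ] (Fin (n + 1) → ℝ), L (0, 1) = v := by
  have hd : Module.finrank ℝ ((Fin n → ℝ) × ℝ) = Module.finrank ℝ (Fin (n + 1) → ℝ) := by simp
  let L₀ : ((Fin n → ℝ) × ℝ) ≃L[ℝ] (Fin (n + 1) → ℝ) := ContinuousLinearEquiv.ofFinrankEq hd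
  obtain ⟨A, hA⟩ := SeparatingDual.exists_continuousLinearEquiv_apply_eq (R := ℝ)
    (x := L₀ (0, 1)) (y := v) (by simp) hv
  exact ⟨L₀.trans A, hA⟩

/-- After a linear change of coordinates that puts a line where `f` does not vanish identically on the
last axis, `f` is regular of some order in the last variable. -/
theorem singleResolution_succ (H : FamilyResolution n) : SingleResolution (n + 1) := by
  intro f hf U hU
  have hid : Admissible U (id : (Fin (n + 1) → ℝ) → _) (U.map id) :=
    Admissible.of_section id analyticAt_id rfl (tendsto_id'.2 hU) (by simp)
  by_cases hz : ∀ᶠ x in 𝓝 0, f x = 0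
  · exact ⟨id, _, hid, Or.inl hz⟩
  by_cases hf0 : f 0 = 0
  swap
  · exact ⟨id, _, hid, Or.inr ⟨0, f, hf, hf0, by simp [mon_zero]⟩⟩
  obtain ⟨v, hv⟩ := exists_line hf hz
  have hv0 : v ≠ 0 := by
    rintro rfl
    simp [hf0] at hv
  obtain ⟨L, hL⟩ := exists_prod_equiv hv0
  have hadm : Admissible U L (U.map L.symm) :=
    Admissible.of_section L.symm (L.analyticAt 0) (map_zero L)
      ((L.symm.continuous.tendsto' 0 0 (map_zero _)).mono_left hU) (by simp)
  refine Resolvable.of_pullback hadm ?_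
  have hline : AnalyticAt ℝ (fun t : ℝ => f (t • v)) 0 :=
    hf.comp_of_eq (f := fun t : ℝ => t • v) ((analyticAt_id (𝕜 := ℝ)).smul analyticAt_const) (by simp)
  obtain ⟨d, w, hw, hw0, hwe⟩ := hline.exists_eventuallyEq_pow_smul_nonzero_iff.2 hv
  have := regularResolution H d (f ∘ L) (hadm.comp_analyticAt hf) ⟨w, hw, hw0, by
    filter_upwards [hwe] with t ht
    have : L (0, t) = t • v := by rw [← hL, ← map_smul]; simp
    simp only [Function.comp_apply, this, ht]
    simp⟩ (fun _ => 1) analyticAt_const _ hadm.le_nhds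
  exact this.congr (Eventually.of_forall fun z => one_mul _)

/-- Local uniformization of real analytic functions along ultrafilters. -/
theorem singleResolution (n : ℕ) : SingleResolution n := by
  induction n with
  | zero =>
    intro f hf U hU
    have hid : Admissible U (id : (Fin 0 → ℝ) → _) (U.map id) :=
      Admissible.of_section id analyticAt_id rfl (tendsto_id'.2 hU) (by simp)
    by_cases hf0 : f 0 = 0
    · exact ⟨id, _, hid, Or.inl (Eventually.of_forall fun x => by
        rw [Subsingleton.elim x 0]; exact hf0)⟩
    · exact ⟨id, _, hid, Or.inr ⟨0, f, hf, hf0, Eventually.of_forall fun x => by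
        rw [mon_zero, one_mul, Function.comp_apply, id]⟩⟩
  | succ n ih => exact singleResolution_succ ih.family
end

/-! ### The Łojasiewicz inequality along ultrafilters -/

section
variable {n : ℕ}

/-- The derivative of `x ^ α * u` along the Euler field `x i ∂ᵢ` is again divisible by `x ^ α`. -/
theorem fderiv_monomial_mul {α : Fin n → ℕ} {g u : (Fin n → ℝ) → ℝ} {x : Fin n → ℝ} (i : Fin n)
    (hu : DifferentiableAt ℝ u x) (hg : DifferentiableAt ℝ g x)
    (h : ∀ᶠ y in 𝓝 x, g y = mon α y * u y) :
    fderiv ℝ g x (Pi.single i (x i)) =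
      mon α x * (α i * u x + fderiv ℝ u x (Pi.single i (x i))) := by
  set w : Fin n → ℝ := Pi.single i (x i) with hw
  have hline : HasDerivAt (fun s : ℝ => x + s • w) w 0 := by
    simpa using ((hasDerivAt_id (0:ℝ)).smul_const w).const_add x
  have hx : x + (0:ℝ) • w = x := by simp
  have hmon : ∀ s : ℝ, mon α (x + s • w) = (1 + s) ^ α i * mon α x := fun s => by
    rw [← mon_update]
    congr 1
    ext k
    by_cases hk : k = i
    · subst hk; simp [hw]; ring
    · simp [hw, hk]
  have h1 : HasDerivAt (fun s : ℝ => g (x + s • w)) (fderiv ℝ g x w) 0 := by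
    have : HasFDerivAt g (fderiv ℝ g x) (x + (0:ℝ) • w) := by rw [hx]; exact hg.hasFDerivAt
    exact this.comp_hasDerivAt 0 hline
  have h2 : HasDerivAt (fun s : ℝ => u (x + s • w)) (fderiv ℝ u x w) 0 := by
    have : HasFDerivAt u (fderiv ℝ u x) (x + (0:ℝ) • w) := by rw [hx]; exact hu.hasFDerivAt
    exact this.comp_hasDerivAt 0 hline
  have h3 : HasDerivAt (fun s : ℝ => (1 + s) ^ α i * mon α x) (α i * mon α x) 0 := by
    simpa using (((hasDerivAt_id (0:ℝ)).const_add 1).pow (α i)).mul_const (mon α x)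
  have h4 := h3.mul h2
  have h5 : (fun s : ℝ => g (x + s • w)) =ᶠ[𝓝 0]
      (fun s : ℝ => (1 + s) ^ α i * mon α x) * fun s : ℝ => u (x + s • w) := by
    have ht : Tendsto (fun s : ℝ => x + s • w) (𝓝 0) (𝓝 x) := by
      simpa using hline.continuousAt.tendsto
    filter_upwards [ht.eventually h] with s hs
    rw [hs, hmon]; rfl
  have := h1.unique (h4.congr_of_eventuallyEq h5)
  rw [this]
  simp
  ring

/-- Łojasiewicz inequality for a normal crossing `x ^ α * u`. With `i` the index of the smallest
`|x i|` among those with `α i ≠ 0`, and `m = ∑ i, α i`, one has `|x i| ^ m ≤ |x ^ α|`, while the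
derivative in the direction `x i ∂ᵢ` is comparable to `x ^ α`, whence
`|x ^ α| ≤ C * |x i| * ‖fderiv ℝ g x‖`. -/
theorem NormalCrossing.lojasiewicz {g : (Fin n → ℝ) → ℝ} (hg : AnalyticAt ℝ g 0) (hg0 : g 0 = 0)
    (h : NormalCrossing g) : ∃ m : ℕ, m ≠ 0 ∧ ∃ C : ℝ, 0 < C ∧
      ∀ᶠ x in 𝓝 0, |g x| ^ m ≤ C * |g x| * ‖fderiv ℝ g x‖ ^ m := by
  obtain ⟨α, u, hu, hu0, he⟩ := h
  have hα : α ≠ 0 := by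
    rintro rfl
    have := he.self_of_nhds
    rw [hg0, mon_zero, one_mul] at this
    exact hu0 this.symm
  obtain ⟨i0, hi0⟩ : ∃ i, α i ≠ 0 := Function.ne_iff.1 hα
  set m := ∑ i, α i with hm
  set c := |u 0| with hc
  have hcpos : 0 < c := abs_pos.2 hu0
  refine ⟨m, ?_, (2 * c) ^ m * (2 / c) ^ m * (2 / c), by positivity, ?_⟩
  · intro h0
    exact hi0 (by simpa using (Finset.sum_eq_zero_iff.1 h0) i0)
  have e1 : ∀ᶠ x in 𝓝 0, |u x| < 2 * c :=
    hu.continuousAt.abs.eventually_lt_const (show |u 0| < 2 * c by linarith)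
  have e2 : ∀ᶠ x in 𝓝 0, 3 / 4 * c < |u x| :=
    hu.continuousAt.abs.eventually_const_lt (show 3 / 4 * c < |u 0| by linarith)
  have e3 : ∀ᶠ x in 𝓝 0, ‖fderiv ℝ u x‖ * ‖x‖ < c / 4 := by
    have : ContinuousAt (fun x => ‖fderiv ℝ u x‖ * ‖x‖) 0 :=
      hu.fderiv.continuousAt.norm.mul continuousAt_id.norm
    exact this.eventually_lt_const (by simp; linarith)
  have e4 : ∀ᶠ x : Fin n → ℝ in 𝓝 0, ‖x‖ < 1 :=
    continuousAt_id.norm.eventually_lt_const (by simp)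
  filter_upwards [e1, e2, e3, e4, he, he.eventually_nhds, hu.eventually_analyticAt,
    hg.eventually_analyticAt] with x h1 h2 h3 h4 hx hxe hua hga
  obtain ⟨i, hi, hmin⟩ := (Finset.univ.filter fun i => α i ≠ 0).exists_min_image (fun i => |x i|)
    ⟨i0, by simpa using hi0⟩
  have hi : α i ≠ 0 := by simpa using hi
  have hxi : |x i| ≤ ‖x‖ := by simpa using norm_le_pi_norm x i
  have hmonle : |x i| ^ m ≤ |mon α x| := by
    rw [mon, Finset.abs_prod, hm, ← Finset.prod_pow_eq_pow_sum]
    refine Finset.prod_le_prod (fun _ _ => by positivity) fun l _ => ?_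
    rw [abs_pow]
    by_cases hl : α l = 0
    · simp [hl]
    · exact pow_le_pow_left₀ (abs_nonneg _) (hmin l (by simpa using hl)) _
  have hnorm : ‖(Pi.single i (x i) : Fin n → ℝ)‖ = |x i| := by
    simp [Pi.norm_single]
  have hder := fderiv_monomial_mul i hua.differentiableAt hga.differentiableAt hxe
  have hlow : c / 2 ≤ |α i * u x + fderiv ℝ u x (Pi.single i (x i))| := by
    have k1 : |fderiv ℝ u x (Pi.single i (x i))| ≤ c / 4 := by
      have := (fderiv ℝ u x).le_opNorm (Pi.single i (x i))
      rw [hnorm, Real.norm_eq_abs] at this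
      nlinarith [norm_nonneg (fderiv ℝ u x)]
    have k2 : |u x| ≤ |α i * u x| := by
      rw [abs_mul, Nat.abs_cast]
      have : (1:ℝ) ≤ α i := by exact_mod_cast Nat.one_le_iff_ne_zero.2 hi
      nlinarith [abs_nonneg (u x)]
    have k3 := abs_sub_abs_le_abs_sub (α i * u x) (-fderiv ℝ u x (Pi.single i (x i)))
    rw [abs_neg, sub_neg_eq_add] at k3
    linarith
  set D := ‖fderiv ℝ g x‖ with hD
  have hD0 : 0 ≤ D := norm_nonneg _
  have hbound : |mon α x| ≤ 2 / c * (|x i| * D) := by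
    have := (fderiv ℝ g x).le_opNorm (Pi.single i (x i))
    rw [hnorm, hder, Real.norm_eq_abs, abs_mul] at this
    have k : |mon α x| * (c / 2) ≤ D * |x i| :=
      (mul_le_mul_of_nonneg_left hlow (abs_nonneg _)).trans this
    calc |mon α x| = 2 / c * (|mon α x| * (c / 2)) := by field_simp
      _ ≤ 2 / c * (|x i| * D) := by rw [mul_comm |x i|]; gcongr
  have hpow : |mon α x| ^ m ≤ (2 / c) ^ m * (|mon α x| * D ^ m) := by
    calc |mon α x| ^ m ≤ (2 / c * (|x i| * D)) ^ m := by gcongr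
      _ = (2 / c) ^ m * (|x i| ^ m * D ^ m) := by rw [mul_pow, mul_pow]
      _ ≤ _ := by gcongr
  have hgabs : |g x| = |mon α x| * |u x| := by rw [hx, abs_mul]
  have hmg : |mon α x| ≤ 2 / c * |g x| := by
    rw [hgabs]
    calc |mon α x| = 2 / c * (|mon α x| * (c / 2)) := by field_simp
      _ ≤ 2 / c * (|mon α x| * |u x|) := by gcongr; linarith
  calc |g x| ^ m ≤ (|mon α x| * (2 * c)) ^ m := by rw [hgabs]; gcongr
    _ = (2 * c) ^ m * |mon α x| ^ m := by rw [mul_pow, mul_comm]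
    _ ≤ (2 * c) ^ m * ((2 / c) ^ m * (|mon α x| * D ^ m)) := by gcongr
    _ ≤ (2 * c) ^ m * ((2 / c) ^ m * ((2 / c * |g x|) * D ^ m)) := by gcongr
    _ = _ := by ring

/-- Łojasiewicz inequality along an ultrafilter, pulled back from the inequality for the
monomialization `F ∘ φ`: by the chain rule, the derivative of `F ∘ φ` at `s x` is bounded by a
constant times that of `F` at `φ (s x) = x`. -/
theorem lojasiewicz_pi {F : (Fin n → ℝ) → ℝ} (hF : AnalyticAt ℝ F 0) (hF0 : F 0 = 0)
    {U : Ultrafilter (Fin n → ℝ)} (hU : (U : Filter (Fin n → ℝ)) ≤ 𝓝 0) :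
    ∃ m : ℕ, m ≠ 0 ∧ ∃ C : ℝ, 0 < C ∧ ∀ᶠ x in (U : Filter (Fin n → ℝ)),
      |F x| ^ m ≤ C * |F x| * ‖fderiv ℝ F x‖ ^ m := by
  obtain ⟨φ, V, hφ, hM⟩ := singleResolution n F hF U hU
  obtain ⟨s, rfl, hs⟩ := hφ.exists_section
  have hs0 : Tendsto s U (𝓝 0) := hφ.le_nhds
  rcases hM with hM | hM
  · refine ⟨1, one_ne_zero, 1, one_pos, ?_⟩
    filter_upwards [hs0.eventually hM, hs] with x h1 h2
    rw [Function.comp_apply, h2] at h1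
    simp [h1]
  · obtain ⟨m, hm, C, hC, hle⟩ := hM.lojasiewicz (hφ.comp_analyticAt hF) (by simp [hφ.map_zero, hF0])
    set K := ‖fderiv ℝ φ 0‖ + 1 with hK
    have hK0 : 0 < K := by positivity
    refine ⟨m, hm, C * K ^ m, by positivity, ?_⟩
    have e1 : ∀ᶠ y in 𝓝 0, ‖fderiv ℝ φ y‖ < K :=
      hφ.analytic.fderiv.continuousAt.norm.eventually_lt_const (by simp [hK])
    filter_upwards [hs0.eventually hle, hs, hs0.eventually e1,
      hs0.eventually hφ.analytic.eventually_analyticAt,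
      hs0.eventually (hφ.tendsto.eventually hF.eventually_analyticAt)] with x h1 h2 h3 h4 h5
    have hcomp : fderiv ℝ (F ∘ φ) (s x) = (fderiv ℝ F x).comp (fderiv ℝ φ (s x)) := by
      rw [fderiv_comp _ h5.differentiableAt h4.differentiableAt, h2]
    rw [Function.comp_apply, h2, hcomp] at h1
    calc |F x| ^ m ≤ C * |F x| * ‖(fderiv ℝ F x).comp (fderiv ℝ φ (s x))‖ ^ m := h1
      _ ≤ C * |F x| * (‖fderiv ℝ F x‖ * K) ^ m := by
          gcongr
          exact (ContinuousLinearMap.opNorm_comp_le _ _).trans (by gcongr)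
      _ = _ := by rw [mul_pow]; ring

theorem norm_gradient {E : Type*} [NormedAddCommGroup E] [InnerProductSpace ℝ E] [CompleteSpace E]
    (f : E → ℝ) (x : E) : ‖gradient f x‖ = ‖fderiv ℝ f x‖ := by
  simp [gradient]

theorem lojasiewicz_euclidean {f : EuclideanSpace ℝ (Fin n) → ℝ} {a : EuclideanSpace ℝ (Fin n)}
    (hf : AnalyticAt ℝ f a) {U : Ultrafilter (EuclideanSpace ℝ (Fin n))}
    (hU : (U : Filter (EuclideanSpace ℝ (Fin n))) ≤ 𝓝 a) :
    ∃ m : ℕ, m ≠ 0 ∧ ∃ C : ℝ, 0 < C ∧ ∀ᶠ x in (U : Filter (EuclideanSpace ℝ (Fin n))),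
      |f x - f a| ^ m ≤ C * |f x - f a| * ‖gradient f x‖ ^ m := by
  set L := (EuclideanSpace.equiv (Fin n) ℝ).symm with hL
  have hT : AnalyticAt ℝ (fun y : Fin n → ℝ => a + L y) 0 := analyticAt_const.add (L.analyticAt 0)
  have hF : AnalyticAt ℝ (fun y => f (a + L y) - f a) 0 :=
    (hf.comp_of_eq hT (by simp)).sub analyticAt_const
  have hs : Tendsto (fun x => L.symm (x - a)) U (𝓝 0) := by
    refine Tendsto.mono_left ?_ hU
    exact (by fun_prop : Continuous fun x => L.symm (x - a)).tendsto' _ _ (by simp)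
  obtain ⟨m, hm, C, hC, h⟩ := lojasiewicz_pi hF (by simp) (U := U.map fun x => L.symm (x - a)) hs
  set K := ‖(L : (Fin n → ℝ) →L[ℝ] EuclideanSpace ℝ (Fin n))‖ + 1 with hK
  have hK0 : 0 < K := by positivity
  have h' : ∀ᶠ x in (U : Filter (EuclideanSpace ℝ (Fin n))), |f (a + L (L.symm (x - a))) - f a| ^ m ≤
      C * |f (a + L (L.symm (x - a))) - f a| *
        ‖fderiv ℝ (fun y => f (a + L y) - f a) (L.symm (x - a))‖ ^ m := h
  refine ⟨m, hm, C * K ^ m, by positivity, ?_⟩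
  filter_upwards [h', hU hf.eventually_analyticAt] with x hx hxa
  simp only [ContinuousLinearEquiv.apply_symm_apply, add_sub_cancel] at hx
  have hd : HasFDerivAt (fun y => f (a + L y) - f a)
      ((fderiv ℝ f x).comp (L : (Fin n → ℝ) →L[ℝ] EuclideanSpace ℝ (Fin n))) (L.symm (x - a)) := by
    refine HasFDerivAt.sub_const _ (HasFDerivAt.comp _ (g := f) (f := fun y => a + L y) ?_ ?_)
    · simpa using hxa.differentiableAt.hasFDerivAt
    · exact L.hasFDerivAt.const_add a
  rw [hd.fderiv] at hx
  rw [norm_gradient]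
  calc _ ≤ _ := hx
    _ ≤ C * |f x - f a| * (‖fderiv ℝ f x‖ * K) ^ m := by
          gcongr
          exact (ContinuousLinearMap.opNorm_comp_le _ _).trans (by gcongr; simp [hK])
    _ = _ := by rw [mul_pow]; ring

/-- Passage from `s ^ m ≤ C * s * D ^ m` to the usual form with exponent `1 - 1 / k`, where a single
large integer `k` replaces both the exponent and the constant. -/
theorem rpow_form {s C D : ℝ} {m k : ℕ} (hm : m ≠ 0) (hs : 0 < s) (hs1 : s ≤ 1) (hC : 0 < C)
    (hD : 0 ≤ D) (hmk : m ≤ k) (hCk : C ^ ((m : ℝ)⁻¹) ≤ k) (h : s ^ m ≤ C * s * D ^ m) :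
    s ^ (1 - (k : ℝ)⁻¹) ≤ k * D := by
  have hm' : (0:ℝ) < m := by exact_mod_cast Nat.pos_of_ne_zero hm
  have h1 : s ≤ C ^ ((m : ℝ)⁻¹) * s ^ ((m : ℝ)⁻¹) * D := by
    have := Real.rpow_le_rpow (by positivity) h (inv_nonneg.2 hm'.le)
    rwa [Real.pow_rpow_inv_natCast hs.le hm, Real.mul_rpow (by positivity) (by positivity),
      Real.mul_rpow hC.le hs.le, Real.pow_rpow_inv_natCast hD hm] at this
  have h2 : s ^ (1 - (m : ℝ)⁻¹) ≤ C ^ ((m : ℝ)⁻¹) * D := by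
    rw [Real.rpow_sub hs, Real.rpow_one, div_le_iff₀ (by positivity)]
    linarith
  calc s ^ (1 - (k : ℝ)⁻¹) ≤ s ^ (1 - (m : ℝ)⁻¹) := by
        refine Real.rpow_le_rpow_of_exponent_ge hs hs1 ?_
        gcongr
    _ ≤ C ^ ((m : ℝ)⁻¹) * D := h2
    _ ≤ k * D := by gcongr

/-- Łojasiewicz gradient inequality along an ultrafilter. The conclusion holds for all large `k` at
once, uniformly in the point. -/
theorem lojasiewicz_exponent {f : EuclideanSpace ℝ (Fin n) → ℝ} {a : EuclideanSpace ℝ (Fin n)}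
    (hf : AnalyticAt ℝ f a) {U : Ultrafilter (EuclideanSpace ℝ (Fin n))}
    (hU : (U : Filter (EuclideanSpace ℝ (Fin n))) ≤ 𝓝 a) :
    ∃ k₀ : ℕ, ∀ᶠ x in (U : Filter (EuclideanSpace ℝ (Fin n))), ∀ k ≥ k₀,
      f x = f a ∨ |f x - f a| ^ (1 - (k : ℝ)⁻¹) ≤ k * ‖gradient f x‖ := by
  obtain ⟨m, hm, C, hC, h⟩ := lojasiewicz_euclidean hf hU
  have e : ∀ᶠ x in 𝓝 a, |f x - f a| < 1 :=
    (hf.continuousAt.sub continuousAt_const).abs.eventually_lt_const (by simp)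
  refine ⟨max m ⌈C ^ ((m : ℝ)⁻¹)⌉₊, ?_⟩
  filter_upwards [h, hU e] with x hx h1 k hk
  by_cases hfx : f x = f a
  · exact Or.inl hfx
  · exact Or.inr (rpow_form hm (abs_pos.2 (sub_ne_zero.2 hfx)) (le_of_lt h1) hC (norm_nonneg _)
      ((le_max_left _ _).trans hk)
      ((Nat.le_ceil _).trans (by exact_mod_cast (le_max_right _ _).trans hk)) hx)
end

/-! ### Length of trajectories -/

section
variable {n : ℕ}

/-- A single `k` works in the Łojasiewicz inequality along a filter `F` supported on a compact set on
which `f` tends to `L`. If not, there is an ultrafilter finer than `F` along which the inequality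
fails for every `k`; it converges to a point where `f = L`, contradicting `lojasiewicz_exponent`. -/
theorem uniform_exponent {f : EuclideanSpace ℝ (Fin n) → ℝ} (hf : AnalyticOnNhd ℝ f Set.univ)
    {K : Set (EuclideanSpace ℝ (Fin n))} (hK : IsCompact K)
    {F : Filter (EuclideanSpace ℝ (Fin n))} (hFK : K ∈ F) {L : ℝ} (hL : Tendsto f F (𝓝 L)) :
    ∃ k : ℕ, k ≠ 0 ∧ ∀ᶠ x in F, f x = L ∨ |f x - L| ^ (1 - (k : ℝ)⁻¹) ≤ k * ‖gradient f x‖ := by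
  set S : ℕ → Set (EuclideanSpace ℝ (Fin n)) := fun k =>
    {x | ∀ j ≥ k, f x = L ∨ |f x - L| ^ (1 - (j : ℝ)⁻¹) ≤ j * ‖gradient f x‖} with hS
  suffices h : ∃ k, S k ∈ F by
    obtain ⟨k, hk⟩ := h
    exact ⟨k + 1, k.succ_ne_zero, mem_of_superset hk fun x hx => hx (k + 1) k.le_succ⟩
  by_contra! hno
  have hmono : Monotone S := fun i j hij x hx l hl => hx l (hij.trans hl)
  have hne : ∀ k, (F ⊓ 𝓟 (S k)ᶜ).NeBot := fun k => by
    rw [neBot_iff]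
    intro h0
    exact hno k (by simpa using mem_iff_inf_principal_compl.2 h0)
  have hG : (⨅ k, F ⊓ 𝓟 (S k)ᶜ).NeBot := by
    refine iInf_neBot_of_directed' ?_ hne
    refine Antitone.directed_ge fun i j hij => ?_
    exact inf_le_inf_left _ (principal_mono.2 (Set.compl_subset_compl.2 (hmono hij)))
  have hUle := Ultrafilter.of_le (⨅ k, F ⊓ 𝓟 (S k)ᶜ)
  set U := Ultrafilter.of (⨅ k, F ⊓ 𝓟 (S k)ᶜ)
  have hUF : (U : Filter _) ≤ F := (hUle.trans (iInf_le _ 0)).trans inf_le_left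
  obtain ⟨a, -, ha⟩ := hK.ultrafilter_le_nhds U (by simpa using hUF hFK)
  have hfa : f a = L :=
    tendsto_nhds_unique ((hf a trivial).continuousAt.mono_left ha) (hL.mono_left hUF)
  obtain ⟨k, hk⟩ := lojasiewicz_exponent (hf a trivial) ha
  rw [hfa] at hk
  have hk' : (S k)ᶜ ∈ (U : Filter _) :=
    ((hUle.trans (iInf_le _ k)).trans inf_le_right) (mem_principal_self _)
  exact (Ultrafilter.compl_mem_iff_notMem.1 hk') hk

/-- Along the flow the energy `f` decreases at the rate `‖∇f‖ ^ 2`. -/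
theorem hasDerivAt_energy {f : EuclideanSpace ℝ (Fin n) → ℝ} (hf : AnalyticOnNhd ℝ f Set.univ)
    {ξ : ℝ → EuclideanSpace ℝ (Fin n)} {t : ℝ}
    (h : HasDerivAt ξ (-(gradient f (ξ t))) t) :
    HasDerivAt (fun s => f (ξ s)) (-‖gradient f (ξ t)‖ ^ 2) t := by
  have hg := (hf (ξ t) trivial).differentiableAt.hasGradientAt.hasFDerivAt
  have := hg.comp_hasDerivAt t h
  rwa [map_neg, InnerProductSpace.toDual_apply_apply, real_inner_self_eq_norm_sq] at this

theorem continuous_gradient {f : EuclideanSpace ℝ (Fin n) → ℝ} (hf : AnalyticOnNhd ℝ f Set.univ) :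
    Continuous (gradient f) := by
  have : Continuous (fderiv ℝ f) := continuousOn_univ.1 hf.fderiv.continuousOn
  exact (InnerProductSpace.toDual ℝ _).symm.continuous.comp this

/-- Łojasiewicz's length estimate, for an energy `E` with dissipation `g ^ 2`. If `E` reaches its limit
`L`, it is constant from then on and `g` vanishes. Otherwise
`-((E - L) ^ (1 / k))' = g ^ 2 * (E - L) ^ (1 / k - 1) / k ≥ g / k ^ 2`, whose integral is finite. -/
theorem lintegral_tail {g E : ℝ → ℝ} {L T : ℝ} {k : ℕ} (hk : k ≠ 0) (hg : ∀ t, 0 ≤ g t)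
    (hE : ∀ t ≥ T, HasDerivAt E (-g t ^ 2) t) (hEL : ∀ t ≥ T, L ≤ E t)
    (hlim : Tendsto E atTop (𝓝 L))
    (hloj : ∀ t ≥ T, E t = L ∨ |E t - L| ^ (1 - (k : ℝ)⁻¹) ≤ k * g t) :
    ∃ T' ≥ T, ∫⁻ t in Set.Ioi T', ENNReal.ofReal (g t) < ⊤ := by
  have hk0 : (0:ℝ) < k := by exact_mod_cast Nat.pos_of_ne_zero hk
  by_cases hex : ∃ t₀ ≥ T, E t₀ = L
  · obtain ⟨t₀, ht₀, hE₀⟩ := hex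
    refine ⟨t₀, ht₀, ?_⟩
    have hanti : AntitoneOn E (Set.Ici T) := by
      refine antitoneOn_of_hasDerivWithinAt_nonpos (f' := fun t => -g t ^ 2) (convex_Ici T)
        (fun t ht => (hE t ht).continuousAt.continuousWithinAt) ?_ ?_
      · intro t ht
        exact (hE t (interior_subset ht)).hasDerivWithinAt
      · intro t _
        simp only [neg_nonpos]; positivity
    have hconst : ∀ t ≥ t₀, E t = L := fun t ht => le_antisymm
      ((hanti ht₀ (ht₀.le.trans ht) ht).trans hE₀.le) (hEL t (ht₀.le.trans ht))
    have hg0 : ∀ t ∈ Set.Ioi t₀, ENNReal.ofReal (g t) = 0 := fun t ht => by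
      have h1 : HasDerivAt E 0 t := (hasDerivAt_const t L).congr_of_eventuallyEq
        (by filter_upwards [Ioi_mem_nhds ht] with s hs using hconst s (le_of_lt hs))
      have h2 := h1.unique (hE t (ht₀.le.trans (le_of_lt ht)))
      simp at h2
      simp [← h2]
    rw [MeasureTheory.setLIntegral_congr_fun measurableSet_Ioi hg0]
    simp
  · push Not at hex
    refine ⟨T, le_rfl, ?_⟩
    have hpos : ∀ t ≥ T, 0 < E t - L := fun t ht =>
      sub_pos.2 (lt_of_le_of_ne (hEL t ht) (hex t ht).symm)
    have hd : ∀ t ∈ Set.Ici T, HasDerivAt (fun s => (E s - L) ^ ((k:ℝ)⁻¹))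
        (-g t ^ 2 * (k:ℝ)⁻¹ * (E t - L) ^ ((k:ℝ)⁻¹ - 1)) t := fun t ht =>
      ((hE t ht).sub_const L).rpow_const (Or.inl (hpos t ht).ne')
    have hnp : ∀ t ∈ Set.Ioi T,
        -g t ^ 2 * (k:ℝ)⁻¹ * (E t - L) ^ ((k:ℝ)⁻¹ - 1) ≤ 0 := fun t ht => by
      have := Real.rpow_nonneg (hpos t (le_of_lt ht)).le ((k:ℝ)⁻¹ - 1)
      have : 0 ≤ g t ^ 2 * (k:ℝ)⁻¹ * (E t - L) ^ ((k:ℝ)⁻¹ - 1) := by positivity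
      linarith
    have hl : Tendsto (fun s => (E s - L) ^ ((k:ℝ)⁻¹)) atTop (𝓝 0) := by
      have h0 : Tendsto (fun s => E s - L) atTop (𝓝 0) := by simpa using hlim.sub_const L
      have := h0.rpow_const (p := (k:ℝ)⁻¹) (Or.inr (by positivity))
      rwa [Real.zero_rpow (by positivity)] at this
    have hint := (MeasureTheory.integrableOn_Ioi_deriv_of_nonpos' hd hnp hl).const_mul (-(k:ℝ) ^ 2)
    refine lt_of_le_of_lt (MeasureTheory.setLIntegral_mono' measurableSet_Ioi fun t ht => ?_)
      hint.lintegral_lt_top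
    refine ENNReal.ofReal_le_ofReal ?_
    have hp := hpos t (le_of_lt ht)
    have h1 := (hloj t (le_of_lt ht)).resolve_left (hex t (le_of_lt ht))
    rw [abs_of_pos hp] at h1
    have h2 : (E t - L) ^ (1 - (k : ℝ)⁻¹) * (E t - L) ^ ((k:ℝ)⁻¹ - 1) = 1 := by
      rw [← Real.rpow_add hp]; simp
    have hq := Real.rpow_nonneg hp.le ((k:ℝ)⁻¹ - 1)
    calc g t = g t * ((E t - L) ^ (1 - (k : ℝ)⁻¹) * (E t - L) ^ ((k:ℝ)⁻¹ - 1)) := by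
          rw [h2, mul_one]
      _ ≤ g t * ((k * g t) * (E t - L) ^ ((k:ℝ)⁻¹ - 1)) := by
          have := hg t
          gcongr
      _ = _ := by field_simp

end
/-- Finite length of bounded analytic gradient flow trajectories.
A bounded negative gradient flow trajectory of a globally real-analytic function
`f : ℝⁿ → ℝ` has finite length: `∫₀^∞ ‖ξ'(t)‖ dt < ∞`, where `ξ'(t) = -∇f(ξ(t))`. -/
theorem bounded_analytic_gradient_flow_finite_length
    (n : ℕ) (hn : 1 ≤ n)
    (f : EuclideanSpace ℝ (Fin n) → ℝ)
    (hf : AnalyticOnNhd ℝ f Set.univ)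
    (ξ : ℝ → EuclideanSpace ℝ (Fin n))
    (hflow : ∀ t : ℝ, 0 ≤ t → HasDerivAt ξ (-(gradient f (ξ t))) t)
    (hbdd : Bornology.IsBounded (ξ '' Set.Ici 0)) :
    ∫⁻ t in Set.Ici (0 : ℝ), ‖-(gradient f (ξ t))‖₊ ∂volume < ⊤ := by
  have hfc : Continuous f := continuousOn_univ.1 hf.continuousOn
  have hE : ∀ t, 0 ≤ t → HasDerivAt (fun s => f (ξ s)) (-‖gradient f (ξ t)‖ ^ 2) t :=
    fun t ht => hasDerivAt_energy hf (hflow t ht)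
  have hanti : AntitoneOn (fun s => f (ξ s)) (Set.Ici 0) := by
    refine antitoneOn_of_hasDerivWithinAt_nonpos (f' := fun t => -‖gradient f (ξ t)‖ ^ 2)
      (convex_Ici 0) (fun t ht => (hE t ht).continuousAt.continuousWithinAt)
      (fun t ht => (hE t (interior_subset ht)).hasDerivWithinAt) fun t _ => ?_
    simp only [neg_nonpos]; positivity
  have hK : IsCompact (closure (ξ '' Set.Ici 0)) := hbdd.isCompact_closure
  have hmem : ∀ t, 0 ≤ t → ξ t ∈ closure (ξ '' Set.Ici 0) :=
    fun t ht => subset_closure ⟨t, ht, rfl⟩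
  -- `ξ` is not controlled for negative times, hence the truncation of `t` at `0`.
  have hanti' : Antitone fun t : ℝ => f (ξ (max t 0)) := fun s t hst =>
    hanti (le_max_right s 0) (le_max_right t 0) (max_le_max_right 0 hst)
  have hbb : BddBelow (Set.range fun t : ℝ => f (ξ (max t 0))) :=
    (hK.bddBelow_image hfc.continuousOn).mono
      (by rintro _ ⟨t, rfl⟩; exact ⟨_, hmem _ (le_max_right t 0), rfl⟩)
  have hlim' := tendsto_atTop_ciInf hanti' hbb
  set L := ⨅ t : ℝ, f (ξ (max t 0)) with hLdef
  have hlim : Tendsto (fun t => f (ξ t)) atTop (𝓝 L) := hlim'.congr' <| by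
    filter_upwards [eventually_ge_atTop 0] with t ht
    rw [max_eq_left ht]
  have hEL : ∀ t, 0 ≤ t → L ≤ f (ξ t) := fun t ht => by
    have := ciInf_le hbb t
    rwa [max_eq_left ht] at this
  obtain ⟨k, hk, hloj⟩ := uniform_exponent hf hK (F := map ξ atTop) (L := L)
    (mem_map.2 ((eventually_ge_atTop (0 : ℝ)).mono hmem)) hlim
  obtain ⟨T, hT⟩ := eventually_atTop.1 (eventually_map.1 hloj)
  obtain ⟨T', hT', hfin⟩ := lintegral_tail (g := fun t => ‖gradient f (ξ t)‖)
    (E := fun t => f (ξ t)) (L := L) (T := max T 0) hk (fun _ => norm_nonneg _)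
    (fun t ht => hE t ((le_max_right _ _).trans ht))
    (fun t ht => hEL t ((le_max_right _ _).trans ht)) hlim
    (fun t ht => hT t ((le_max_left _ _).trans ht))
  have hc : ContinuousOn (fun t => ‖gradient f (ξ t)‖) (Set.Icc 0 T') :=
    ((continuous_gradient hf).comp_continuousOn fun t ht =>
      (hflow t ht.1).continuousAt.continuousWithinAt).norm
  have hfin' : ∫⁻ t in Set.Icc 0 T', ENNReal.ofReal ‖gradient f (ξ t)‖ < ⊤ :=
    hc.integrableOn_Icc.lintegral_lt_top
  have he : ∀ t, ((‖-(gradient f (ξ t))‖₊ : NNReal) : ENNReal) =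
      ENNReal.ofReal ‖gradient f (ξ t)‖ := fun t => by
    rw [nnnorm_neg, ofReal_norm]; rfl
  simp only [he]
  calc _ ≤ ∫⁻ t in Set.Icc 0 T' ∪ Set.Ioi T', ENNReal.ofReal ‖gradient f (ξ t)‖ :=
        lintegral_mono_set fun t ht => by
          rcases le_or_gt t T' with h | h
          · exact Or.inl ⟨ht, h⟩
          · exact Or.inr h
    _ ≤ _ := lintegral_union_le _ _ _
    _ < ⊤ := ENNReal.add_lt_top.2 ⟨hfin', hfin⟩
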